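/- arXiv:1906.09541 — 2 statements merged into one kernel-verified Lean document; each statement's English description precedes it below -/
import Mathlib

section
/- The equality =_RCCS is closed under parallel composition: for all RCCS processes A, B, C, D, if A =_RCCS B and C =_RCCS D then A|C =_RCCS B|D. (Equivalently, the equivalence closure of {(A|C, B|D) | A =_RCCS B and C =_RCCS D} ∪ =_RCCS is a codivergent branching bisimulation.) -/
/-!
Formalization of RCCS (Randomized CCS) following the paper
"A Uniform Framework for Probabilistic Process Models".
Channels form a type `Chan`; terms use de Bruijn indices for process variables.
-/

noncomputable section
open scoped Classical

/-- RCCS terms over a set of channels, with de Bruijn process variables.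
`sum n α T` is the nondeterministic choice `Σ_{i∈[n]} α_i.T_i` (guards are
names `Sum.inl a` or conames `Sum.inr a`); `rand n p T` is the random choice
`⊕_{i∈[n]} p_i τ.T_i`; `par` is composition, `loc a T` is localization `(a)T`,
and `fix T` is the fixpoint `μX.T`. -/
inductive Tm (Chan : Type) : Type
  | var : ℕ → Tm Chan
  | sum : (n : ℕ) → (Fin n → Chan ⊕ Chan) → (Fin n → Tm Chan) → Tm Chan
  | rand : (n : ℕ) → (Fin n → ℝ) → (Fin n → Tm Chan) → Tm Chan
  | par : Tm Chan → Tm Chan → Tm Chan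
  | loc : Chan → Tm Chan → Tm Chan
  | fix : Tm Chan → Tm Chan

variable {Chan : Type}

/-- Labels: names, conames, and `tau p` for `p ∈ (0,1]`; `tau 1` is the plain
silent action `τ`, identified with `1τ`. -/
inductive Lab (Chan : Type) : Type
  | name : Chan → Lab Chan
  | coname : Chan → Lab Chan
  | tau : ℝ → Lab Chan

/-- The label of an external prefix. -/
def guardLab : Chan ⊕ Chan → Lab Chan
  | .inl a => .name a
  | .inr a => .coname a

/-- A label is an action in `Act` if it is a name, a coname, or `τ = 1τ`. -/
def Lab.IsAct : Lab Chan → Prop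
  | .name _ => True
  | .coname _ => True
  | .tau p => p = 1

/-- Shift de Bruijn indices `≥ c` up by one. -/
def Tm.lift : ℕ → Tm Chan → Tm Chan
  | c, .var n => .var (if n < c then n else n + 1)
  | c, .sum n α T => .sum n α fun i => Tm.lift c (T i)
  | c, .rand n p T => .rand n p fun i => Tm.lift c (T i)
  | c, .par S T => .par (Tm.lift c S) (Tm.lift c T)
  | c, .loc a T => .loc a (Tm.lift c T)
  | c, .fix T => .fix (Tm.lift (c + 1) T)

/-- Capture-avoiding substitution of the term `S` for variable `c`
(other variables above `c` are shifted down). -/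
def Tm.inst : ℕ → Tm Chan → Tm Chan → Tm Chan
  | c, S, .var n => if n < c then .var n else if n = c then S else .var (n - 1)
  | c, S, .sum n α T => .sum n α fun i => Tm.inst c S (T i)
  | c, S, .rand n p T => .rand n p fun i => Tm.inst c S (T i)
  | c, S, .par S' T => .par (Tm.inst c S S') (Tm.inst c S T)
  | c, S, .loc a T => .loc a (Tm.inst c S T)
  | c, S, .fix T => .fix (Tm.inst (c + 1) (Tm.lift 0 S) T)

/-- All free variables are `< k`. -/
def Tm.ClosedAt : ℕ → Tm Chan → Prop
  | k, .var n => n < k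
  | k, .sum _ _ T => ∀ i, Tm.ClosedAt k (T i)
  | k, .rand _ _ T => ∀ i, Tm.ClosedAt k (T i)
  | k, .par S T => Tm.ClosedAt k S ∧ Tm.ClosedAt k T
  | k, .loc _ T => Tm.ClosedAt k T
  | k, .fix T => Tm.ClosedAt (k + 1) T

/-- Variable `v` is guarded: every free occurrence of `v` is under a prefix. -/
def Tm.Guarded : ℕ → Tm Chan → Prop
  | v, .var n => n ≠ v
  | _, .sum _ _ _ => True
  | _, .rand _ _ _ => True
  | v, .par S T => Tm.Guarded v S ∧ Tm.Guarded v T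
  | v, .loc _ T => Tm.Guarded v T
  | v, .fix T => Tm.Guarded (v + 1) T

/-- Well-formedness: in every random choice `⊕_{i∈I} p_i τ.T_i` we have `|I| ≥ 2`,
`p_i ∈ (0,1)` and `Σ_i p_i = 1`; in every fixpoint `μX.T` the variable `X` is
guarded in `T`. -/
def Tm.WF : Tm Chan → Prop
  | .var _ => True
  | .sum _ _ T => ∀ i, Tm.WF (T i)
  | .rand n p T => 2 ≤ n ∧ (∀ i, 0 < p i ∧ p i < 1) ∧ (∑ i, p i) = 1 ∧ ∀ i, Tm.WF (T i)
  | .par S T => Tm.WF S ∧ Tm.WF T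
  | .loc _ T => Tm.WF T
  | .fix T => Tm.Guarded 0 T ∧ Tm.WF T

/-- A term with no random choice, i.e. a CCS term. -/
def Tm.NoRand : Tm Chan → Prop
  | .var _ => True
  | .sum _ _ T => ∀ i, Tm.NoRand (T i)
  | .rand _ _ _ => False
  | .par S T => Tm.NoRand S ∧ Tm.NoRand T
  | .loc _ T => Tm.NoRand T
  | .fix T => Tm.NoRand T

/-- The transition relation of RCCS. -/
inductive Step : Tm Chan → Lab Chan → Tm Chan → Prop
  | sum {n α T} (i : Fin n) : Step (.sum n α T) (guardLab (α i)) (T i)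
  | rand {n p T} (i : Fin n) : Step (.rand n p T) (.tau (p i)) (T i)
  | comL {S S' T T' a} : Step S (.name a) S' → Step T (.coname a) T' →
      Step (.par S T) (.tau 1) (.par S' T')
  | comR {S S' T T' a} : Step S (.coname a) S' → Step T (.name a) T' →
      Step (.par S T) (.tau 1) (.par S' T')
  | parL {S S' T l} : Step S l S' → Step (.par S T) l (.par S' T)
  | parR {S T T' l} : Step T l T' → Step (.par S T) l (.par S T')
  | loc {T T' l} (a : Chan) : Step T l T' → l ≠ .name a → l ≠ .coname a →
      Step (.loc a T) l (.loc a T')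
  | fix {T T' l} : Step (Tm.inst 0 (.fix T) T) l T' → Step (.fix T) l T'

/-- Collective silent transitions `B →^{∐_{i∈[n]} p_i τ} ∐_{i∈[n]} B_i`,
arising from a single random choice and closed under composition,
localization and recursion. -/
inductive CStep : Tm Chan → (n : ℕ) → (Fin n → ℝ) → (Fin n → Tm Chan) → Prop
  | rand {n p T} : CStep (.rand n p T) n p T
  | parL {S T n p S'} : CStep S n p S' → CStep (.par S T) n p fun i => .par (S' i) T
  | parR {S T n p T'} : CStep T n p T' → CStep (.par S T) n p fun i => .par S (T' i)
  | loc {T n p T'} (a : Chan) : CStep T n p T' → CStep (.loc a T) n p fun i => .loc a (T' i)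
  | fix {T n p T'} : CStep (Tm.inst 0 (.fix T) T) n p T' → CStep (.fix T) n p T'

/-- The set `P_RCCS` of RCCS processes: closed well-formed terms. -/
def Proc (Chan : Type) : Type := {T : Tm Chan // T.ClosedAt 0 ∧ T.WF}

/-- A (potential) silent tree: nodes are addressed by reversed lists of child
indices (the root is `[]`, the `i`-th child of `σ` is `i :: σ`); each node
carries a process label and the probability labelling its incoming edge
(the root carries `1`). -/
structure PTree (Chan : Type) where
  node : List ℕ → Option (Proc Chan × ℝ)

namespace PTree

variable (t : PTree Chan)

/-- The address `σ` is a node of the tree. -/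
def hasNode (σ : List ℕ) : Prop := (t.node σ).isSome

/-- The probability labelling the incoming edge of the node at `σ`. -/
def edgeProb (σ : List ℕ) : ℝ := ((t.node σ).map Prod.snd).getD 0

/-- The probability of the path from the root to `σ`: the product of the edge
labels along it (`1` for the empty path). -/
def pathProb (t : PTree Chan) : List ℕ → ℝ
  | [] => 1
  | i :: σ => t.edgeProb (i :: σ) * pathProb t σ

/-- `σ` is a leaf. -/
def IsLeaf (σ : List ℕ) : Prop := t.hasNode σ ∧ ¬ t.hasNode (0 :: σ)

/-- `P(t↾_k)`: the sum of the probabilities of the branches of the truncation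
of `t` at depth `k` (a branch of `t↾_k` ends either at depth `k` or at a leaf
of `t` of depth `< k`). -/
def truncProb (k : ℕ) : ℝ :=
  ∑' σ : List ℕ,
    if t.hasNode σ ∧ (σ.length = k ∨ (σ.length < k ∧ ¬ t.hasNode (0 :: σ)))
    then t.pathProb σ else 0

/-- `P^k(t)`: the sum of the probabilities of the finite branches of `t` of
length at most `k`. -/
def finBranchProb (k : ℕ) : ℝ :=
  ∑' σ : List ℕ, if t.IsLeaf σ ∧ σ.length ≤ k then t.pathProb σ else 0

/-- `t` is regular: `P^f(t) = lim_k P^k(t) = 1`. -/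
def Regular : Prop := Filter.Tendsto t.finBranchProb Filter.atTop (nhds 1)

/-- `t` is divergent: `P^f(t) = lim_k P^k(t) = 0`. -/
def Divergent : Prop := Filter.Tendsto t.finBranchProb Filter.atTop (nhds 0)

end PTree

/-- `t` is a silent tree of `A`: the root is labeled `A`, the node set is
prefix-closed with children indexed by an initial segment of `ℕ`, the tree is
finitely branching, and every edge labeled `p` from `B` to `B'` satisfies
`p ∈ (0,1]` and `B →^{pτ} B'`. -/
def IsSilentTree (A : Proc Chan) (t : PTree Chan) : Prop :=
  t.node [] = some (A, 1) ∧
  (∀ i σ, t.hasNode (i :: σ) → t.hasNode σ) ∧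
  (∀ i j σ, j ≤ i → t.hasNode (i :: σ) → t.hasNode (j :: σ)) ∧
  (∀ σ, ∃ n, ∀ i, n ≤ i → ¬ t.hasNode (i :: σ)) ∧
  (∀ σ i B p B' p', t.node σ = some (B, p) → t.node (i :: σ) = some (B', p') →
    0 < p' ∧ p' ≤ 1 ∧ Step B.val (.tau p') B'.val)

/-- An ε-tree of `A` with regard to `E`: an `E`-tree of `A` (all node labels lie
in `[A]_E`) such that (1) any edge labeled `q < 1` out of a node `B` comes from a
collective random transition whose targets are exactly the children of `B`, and
(2) an edge labeled `1` out of `B` is a transition `B →^τ B'` to the unique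
child `B'` of `B`. -/
def IsETree (E : Proc Chan → Proc Chan → Prop) (A : Proc Chan) (t : PTree Chan) : Prop :=
  IsSilentTree A t ∧
  (∀ σ B p, t.node σ = some (B, p) → E A B) ∧
  (∀ σ i B p B' q, t.node σ = some (B, p) → t.node (i :: σ) = some (B', q) → q < 1 →
    ∃ n ps Ts, CStep B.val n ps Ts ∧
      (∀ j : ℕ, t.hasNode (j :: σ) ↔ j < n) ∧
      (∀ j : Fin n, ∃ C : Proc Chan, C.val = Ts j ∧ t.node ((j : ℕ) :: σ) = some (C, ps j))) ∧
  (∀ σ i B p B', t.node σ = some (B, p) → t.node (i :: σ) = some (B', 1) →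
    Step B.val (.tau 1) B'.val ∧ i = 0 ∧ ¬ t.hasNode (1 :: σ))

/-- The `E`-class of `A`. -/
def classOf (E : Proc Chan → Proc Chan → Prop) (A : Proc Chan) : Set (Proc Chan) := {B | E A B}

/-- `C` is an equivalence class of `E`. -/
def IsClass (E : Proc Chan → Proc Chan → Prop) (C : Set (Proc Chan)) : Prop :=
  ∃ A, C = classOf E A

/-- An equivalence `E` on `P_RCCS` is codivergent if for every `E`-class either
all members have a divergent ε-tree with regard to `E` or none does. -/
def Codivergent (E : Proc Chan → Proc Chan → Prop) : Prop :=
  ∀ A B, E A B →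
    ((∃ t, IsETree E A t ∧ t.Divergent) ↔ (∃ t, IsETree E B t ∧ t.Divergent))

/-- An ℓ-transition `A ⇝_E →^ℓ C`: a regular ε-tree of `A` with regard to `E`
such that every leaf `L` has a transition `L →^ℓ L'` with `L' ∈ C`. -/
def LTrans (E : Proc Chan → Proc Chan → Prop) (A : Proc Chan) (l : Lab Chan)
    (C : Set (Proc Chan)) : Prop :=
  ∃ t, IsETree E A t ∧ t.Regular ∧
    ∀ σ L p, t.node σ = some (L, p) → ¬ t.hasNode (0 :: σ) →
      ∃ L' ∈ C, Step L.val l L'.val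

/-- The raw term `T` belongs to the set `C` of processes. -/
def inC (C : Set (Proc Chan)) (T : Tm Chan) : Prop := ∃ P ∈ C, P.val = T

/-- `P(L → C)` of a collective silent transition: the sum of the `p_i` whose
target lies in `C`. -/
def collProb (C : Set (Proc Chan)) {n : ℕ} (ps : Fin n → ℝ) (Ts : Fin n → Tm Chan) : ℝ :=
  ∑ i, if inC C (Ts i) then ps i else 0

/-- A `q`-transition `A ⇝_E →^q C`: a regular ε-tree of `A` with regard to `E`
such that every leaf has a collective silent transition whose weighted
probability `P_E(L → C) = P(L → C)/(1 − P(L → [A]_E))` of reaching `C` is `q`. -/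
def QTrans (E : Proc Chan → Proc Chan → Prop) (A : Proc Chan) (q : ℝ)
    (C : Set (Proc Chan)) : Prop :=
  ∃ t, IsETree E A t ∧ t.Regular ∧
    ∀ σ L p, t.node σ = some (L, p) → ¬ t.hasNode (0 :: σ) →
      ∃ (n : ℕ) (ps : Fin n → ℝ) (Ts : Fin n → Tm Chan), CStep L.val n ps Ts ∧
        collProb C ps Ts / (1 - collProb (classOf E A) ps Ts) = q

/-- `E` is a branching bisimulation on `P_RCCS`: an equivalence such that
(1) ℓ-transitions with `ℓ ≠ τ ∨ C ≠ [A]_E` are bisimulated by all members of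
`[A]_E`, and (2) likewise for `q`-transitions with `q ∈ (0,1]` and `C ≠ [A]_E`. -/
def IsBB (E : Proc Chan → Proc Chan → Prop) : Prop :=
  Equivalence E ∧
  (∀ A B l C, l.IsAct → IsClass E C → E A B → (l ≠ Lab.tau 1 ∨ C ≠ classOf E A) →
    LTrans E A l C → LTrans E B l C) ∧
  (∀ A B q C, 0 < q → q ≤ 1 → IsClass E C → E A B → C ≠ classOf E A →
    QTrans E A q C → QTrans E B q C)

/-- `E` is a codivergent branching bisimulation on `P_RCCS`. -/
def IsCBB (E : Proc Chan → Proc Chan → Prop) : Prop := IsBB E ∧ Codivergent E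

/-- `=_RCCS`, the largest codivergent branching bisimulation: the union of all
codivergent branching bisimulations. -/
def RccsEq (A B : Proc Chan) : Prop := ∃ E, IsCBB E ∧ E A B

/-- The composition of two processes. -/
def Proc.par (A B : Proc Chan) : Proc Chan :=
  ⟨.par A.val B.val, ⟨A.prop.1, B.prop.1⟩, A.prop.2, B.prop.2⟩

/-!
The candidate bisimulation relates `A|C` to `B|D` when the components are related, and every other
process only to itself; its class of `A|C` is the product of the classes of the components.

Weak transitions: run an ε-tree of the left component and graft an ε-tree of the right component
at each of its leaves. Leaf probabilities multiply, so grafting preserves regularity, and the leaves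
are the compositions of the leaves of the two trees. A single step of a composition is a step of
one component or a communication, hence it is simulated by a graft of weak transitions of the
components.

Divergence: if two processes in the component classes can communicate without leaving these
classes, then each composition in the product class can either move inside one component or
communicate, and this goes on forever. Otherwise every infinite behavior within the product class
interleaves behaviors of the components: if the right component cannot diverge, then the left
one has to move again and again, so it diverges.
-/

open Filter Set

section Composition

theorem Proc.par_injective2 : Function.Injective2 (Proc.par (Chan := Chan)) := by
  intro A B C D h
  have hval := congrArg Subtype.val h
  simp only [Proc.par, Tm.par.injEq] at hval
  exact ⟨Subtype.ext hval.1, Subtype.ext hval.2⟩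

theorem Proc.exists_eq_par {P : Proc Chan} {S T : Tm Chan} (h : P.val = .par S T) :
    ∃ A C : Proc Chan, A.val = S ∧ C.val = T ∧ P = A.par C := by
  obtain ⟨_, hclosed, hwf⟩ := P
  subst h
  exact ⟨⟨S, hclosed.1, hwf.1⟩, ⟨T, hclosed.2, hwf.2⟩, rfl, rfl, rfl⟩

theorem Proc.exists_eq_par_left {P Q : Proc Chan} {S : Tm Chan} (h : P.val = .par S Q.val) :
    ∃ A : Proc Chan, A.val = S ∧ P = A.par Q := by
  obtain ⟨A, C, hA, hC, rfl⟩ := Proc.exists_eq_par h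
  obtain rfl := Subtype.ext hC
  exact ⟨A, hA, rfl⟩

theorem Proc.exists_eq_par_right {P Q : Proc Chan} {T : Tm Chan} (h : Q.val = .par P.val T) :
    ∃ C : Proc Chan, C.val = T ∧ Q = P.par C := by
  obtain ⟨A, C, hA, hC, rfl⟩ := Proc.exists_eq_par h
  obtain rfl := Subtype.ext hA
  exact ⟨C, hC, rfl⟩

theorem guardLab_isAct (α : Chan ⊕ Chan) : (guardLab α).IsAct := by
  cases α <;> trivial

theorem guardLab_ne_tau (α : Chan ⊕ Chan) (p : ℝ) : guardLab α ≠ .tau p := by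
  cases α <;> simp [guardLab]

/-- The components `P` and `Q` can communicate, becoming `P'` and `Q'`: they perform
complementary actions (`Sum.swap` exchanges names and conames). -/
def Handshake (P Q P' Q' : Proc Chan) : Prop :=
  ∃ α, Step P.val (guardLab α) P'.val ∧ Step Q.val (guardLab α.swap) Q'.val

theorem Handshake.step {P Q P' Q' : Proc Chan} (h : Handshake P Q P' Q') :
    Step (P.par Q).val (.tau 1) (P'.par Q').val := by
  obtain ⟨_ | _, hP, hQ⟩ := h
  · exact .comL hP hQ
  · exact .comR hP hQ

theorem Step.par_cases {P Q R : Proc Chan} {l : Lab Chan} (h : Step (P.par Q).val l R.val) :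
    (∃ P' : Proc Chan, R = P'.par Q ∧ Step P.val l P'.val) ∨
    (∃ Q' : Proc Chan, R = P.par Q' ∧ Step Q.val l Q'.val) ∨
    (l = .tau 1 ∧ ∃ P' Q' : Proc Chan, R = P'.par Q' ∧ Handshake P Q P' Q') := by
  obtain ⟨_, hclosed, hwf⟩ := R
  simp only [Proc.par] at h
  cases h with
  | parL hP => exact .inl ⟨⟨_, hclosed.1, hwf.1⟩, rfl, hP⟩
  | parR hQ => exact .inr (.inl ⟨⟨_, hclosed.2, hwf.2⟩, rfl, hQ⟩)
  | @comL _ _ _ _ a hP hQ =>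
    exact .inr (.inr ⟨rfl, ⟨_, hclosed.1, hwf.1⟩, ⟨_, hclosed.2, hwf.2⟩, rfl, .inl a, hP, hQ⟩)
  | @comR _ _ _ _ a hP hQ =>
    exact .inr (.inr ⟨rfl, ⟨_, hclosed.1, hwf.1⟩, ⟨_, hclosed.2, hwf.2⟩, rfl, .inr a, hP, hQ⟩)

theorem CStep.step {S : Tm Chan} {n : ℕ} {p : Fin n → ℝ} {T : Fin n → Tm Chan}
    (h : CStep S n p T) (i : Fin n) : Step S (.tau (p i)) (T i) := by
  induction h with
  | rand => exact .rand i
  | parL _ ih => exact .parL (ih i)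
  | parR _ ih => exact .parR (ih i)
  | loc a _ ih => exact .loc a (ih i) (by simp) (by simp)
  | fix _ ih => exact .fix (ih i)

theorem CStep.par_cases {S T : Tm Chan} {n : ℕ} {p : Fin n → ℝ} {U : Fin n → Tm Chan}
    (h : CStep (.par S T) n p U) :
    (∃ S', U = (fun i => .par (S' i) T) ∧ CStep S n p S') ∨
    (∃ T', U = (fun i => .par S (T' i)) ∧ CStep T n p T') := by
  cases h with
  | parL h => exact .inl ⟨_, rfl, h⟩
  | parR h => exact .inr ⟨_, rfl, h⟩

end Composition

/-- The possible lists of labeled children of a node `P` in an ε-tree: none at a leaf, a single one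
for a plain silent transition, and all targets of a collective random transition otherwise. -/
inductive Expansion : Proc Chan → List (Proc Chan × ℝ) → Prop
  | leaf (P : Proc Chan) : Expansion P []
  | tau {P Q : Proc Chan} : Step P.val (.tau 1) Q.val → Expansion P [(Q, 1)]
  | random {P : Proc Chan} {n : ℕ} {p : Fin n → ℝ} {Q : Fin n → Proc Chan} :
      CStep P.val n p (fun i => (Q i).val) → (∀ i, 0 < p i ∧ p i < 1) →
      Expansion P (List.ofFn fun i => (Q i, p i))

namespace Expansion

variable {P Q : Proc Chan} {l : List (Proc Chan × ℝ)}

theorem step {p : ℝ} (h : Expansion P l) (hQ : (Q, p) ∈ l) :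
    0 < p ∧ p ≤ 1 ∧ Step P.val (.tau p) Q.val := by
  cases h with
  | leaf => simp at hQ
  | tau hs =>
    obtain ⟨rfl, rfl⟩ : Q = _ ∧ p = 1 := by simpa using hQ
    exact ⟨one_pos, le_rfl, hs⟩
  | random hs hp =>
    obtain ⟨i, hi⟩ := List.mem_ofFn.1 hQ
    obtain ⟨rfl, rfl⟩ := Prod.mk.inj hi
    exact ⟨(hp i).1, (hp i).2.le, hs.step i⟩

theorem exists_cStep {q : ℝ} (h : Expansion P l) (hQ : (Q, q) ∈ l) (hq : q < 1) :
    ∃ (n : ℕ) (p : Fin n → ℝ) (R : Fin n → Proc Chan),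
      CStep P.val n p (fun i => (R i).val) ∧ l = List.ofFn fun i => (R i, p i) := by
  cases h with
  | leaf => simp at hQ
  | tau => simp [hq.ne] at hQ
  | random hs => exact ⟨_, _, _, hs, rfl⟩

theorem eq_singleton (h : Expansion P l) (hQ : (Q, 1) ∈ l) : l = [(Q, 1)] := by
  cases h with
  | leaf => simp at hQ
  | tau => simpa [eq_comm] using hQ
  | random _ hp =>
    obtain ⟨i, hi⟩ := List.mem_ofFn.1 hQ
    exact absurd (congrArg Prod.snd hi) (hp i).2.ne

theorem par_left (h : Expansion P l) (Q : Proc Chan) :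
    Expansion (P.par Q) (l.map (Prod.map (·.par Q) id)) := by
  cases h with
  | leaf => exact .leaf _
  | tau hs => exact .tau (.parL hs)
  | random hs hp =>
    rw [List.map_ofFn]
    exact .random (Q := fun i => (_ : Proc Chan).par Q) (.parL hs) hp

theorem par_right (h : Expansion Q l) (P : Proc Chan) :
    Expansion (P.par Q) (l.map (Prod.map P.par id)) := by
  cases h with
  | leaf => exact .leaf _
  | tau hs => exact .tau (.parR hs)
  | random hs hp =>
    rw [List.map_ofFn]
    exact .random (Q := fun i => P.par _) (.parR hs) hp

theorem par_cases (h : Expansion (P.par Q) l) :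
    (∃ P' Q', Handshake P Q P' Q' ∧ l = [(P'.par Q', 1)]) ∨
    (∃ l', Expansion P l' ∧ l = l'.map (Prod.map (·.par Q) id)) ∨
    (∃ l', Expansion Q l' ∧ l = l'.map (Prod.map P.par id)) := by
  cases h with
  | leaf => exact .inr (.inl ⟨[], .leaf P, rfl⟩)
  | tau hs =>
    obtain ⟨P', rfl, hP⟩ | ⟨Q', rfl, hQ⟩ | ⟨-, P', Q', rfl, hPQ⟩ := hs.par_cases
    · exact .inr (.inl ⟨_, .tau hP, rfl⟩)
    · exact .inr (.inr ⟨_, .tau hQ, rfl⟩)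
    · exact .inl ⟨P', Q', hPQ, rfl⟩
  | random hs hp =>
    obtain ⟨S, hR, hS⟩ | ⟨T, hR, hT⟩ := hs.par_cases
    · choose P' hP' hRP' using fun i => Proc.exists_eq_par_left (congrFun hR i)
      obtain rfl := funext hP'
      exact .inr (.inl ⟨_, .random hS hp, by simp [List.map_ofFn, Function.comp_def, hRP']⟩)
    · choose Q' hQ' hRQ' using fun i => Proc.exists_eq_par_right (congrFun hR i)
      obtain rfl := funext hQ'
      exact .inr (.inr ⟨_, .random hT hp, by simp [List.map_ofFn, Function.comp_def, hRQ']⟩)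

end Expansion

section Trees

variable {E : Proc Chan → Proc Chan → Prop} {A : Proc Chan} {t : PTree Chan}

theorem PTree.hasNode_iff {σ : List ℕ} : t.hasNode σ ↔ ∃ P p, t.node σ = some (P, p) := by
  simp [PTree.hasNode, Option.isSome_iff_exists]

theorem IsETree.exists_expansion {σ : List ℕ} {P : Proc Chan} {p : ℝ} (h : IsETree E A t)
    (hσ : t.node σ = some (P, p)) : ∃ l, Expansion P l ∧ ∀ i, t.node (i :: σ) = l[i]? := by
  obtain ⟨⟨-, -, hinit, -, hedge⟩, -, hrandom, htau⟩ := h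
  by_cases h0 : t.hasNode (0 :: σ)
  · obtain ⟨Q, q, hQ⟩ := PTree.hasNode_iff.1 h0
    obtain ⟨-, hq, hs⟩ := hedge _ _ _ _ _ _ hσ hQ
    rcases hq.lt_or_eq with hq | rfl
    · obtain ⟨n, ps, Ts, hs, hn, hTs⟩ := hrandom _ _ _ _ _ _ hσ hQ hq
      choose R hR hnode using hTs
      obtain rfl := funext hR
      refine ⟨_, .random hs fun i => ?_, fun i => ?_⟩
      · obtain ⟨hpos, hle, -⟩ := hedge _ _ _ _ _ _ hσ (hnode i)
        refine ⟨hpos, hle.lt_of_ne fun hps => ?_⟩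
        have hi : (i : ℕ) = 0 := (htau _ _ _ _ _ hσ (hps ▸ hnode i)).2.1
        have hQi := hnode i
        rw [hi, hQ] at hQi
        exact hq.ne ((congrArg Prod.snd (Option.some.inj hQi)).trans hps)
      · by_cases hi : i < n
        · simpa [hi] using hnode ⟨i, hi⟩
        · simpa [hi, PTree.hasNode] using mt (hn i).1 hi
    · obtain ⟨-, -, h1⟩ := htau _ _ _ _ _ hσ hQ
      refine ⟨_, .tau hs, fun i => ?_⟩
      cases i with
      | zero => simpa using hQ
      | succ i => simpa [PTree.hasNode] using mt (hinit (i + 1) 1 σ (by omega)) h1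
  · exact ⟨[], .leaf P, fun i => by simpa [PTree.hasNode] using mt (hinit i 0 σ i.zero_le) h0⟩

theorem IsSilentTree.hasNode_nil (h : IsSilentTree A t) : t.hasNode [] :=
  PTree.hasNode_iff.2 ⟨A, 1, h.1⟩

theorem IsSilentTree.hasNode_of_cons (h : IsSilentTree A t) {i : ℕ} {σ : List ℕ} :
    t.hasNode (i :: σ) → t.hasNode σ :=
  h.2.1 i σ

theorem IsETree.of_expansion (hroot : t.node [] = some (A, 1))
    (hprefix : ∀ i σ, t.hasNode (i :: σ) → t.hasNode σ)
    (hnode : ∀ σ P p, t.node σ = some (P, p) →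
      E A P ∧ ∃ l, Expansion P l ∧ ∀ i, t.node (i :: σ) = l[i]?) : IsETree E A t := by
  have hchild : ∀ σ P p, t.node σ = some (P, p) →
      ∃ l, Expansion P l ∧ (∀ i, t.node (i :: σ) = l[i]?) ∧
        ∀ i, t.hasNode (i :: σ) ↔ i < l.length := fun σ P p hσ => by
    obtain ⟨-, l, hl, hi⟩ := hnode σ P p hσ
    exact ⟨l, hl, hi, fun i => by simp [PTree.hasNode, hi]⟩
  refine ⟨⟨hroot, hprefix, fun i j σ hji hi => ?_, fun σ => ?_, fun σ i P p Q q hP hQ => ?_⟩,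
    fun σ P p hP => (hnode σ P p hP).1, fun σ i P p Q q hP hQ hq => ?_,
    fun σ i P p Q hP hQ => ?_⟩
  · obtain ⟨P, p, hP⟩ := PTree.hasNode_iff.1 (hprefix i σ hi)
    obtain ⟨l, -, -, hl⟩ := hchild σ P p hP
    exact (hl j).2 (hji.trans_lt ((hl i).1 hi))
  · by_cases hσ : t.hasNode σ
    · obtain ⟨P, p, hP⟩ := PTree.hasNode_iff.1 hσ
      obtain ⟨l, -, -, hl⟩ := hchild σ P p hP
      exact ⟨l.length, fun i hi => mt (hl i).1 hi.not_gt⟩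
    · exact ⟨0, fun i _ => mt (hprefix i σ) hσ⟩
  · obtain ⟨l, hl, hi, -⟩ := hchild σ P p hP
    exact hl.step (List.mem_of_getElem? (hi i ▸ hQ))
  · obtain ⟨l, hl, hi, hlen⟩ := hchild σ P p hP
    obtain ⟨n, ps, R, hs, rfl⟩ := hl.exists_cStep (List.mem_of_getElem? (hi i ▸ hQ)) hq
    exact ⟨n, ps, _, hs, fun j => by simpa using hlen j, fun j => ⟨R j, rfl, by simp [hi]⟩⟩
  · obtain ⟨l, hl, hi, hlen⟩ := hchild σ P p hP
    have hs := (hl.step (List.mem_of_getElem? (hi i ▸ hQ))).2.2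
    obtain rfl := hl.eq_singleton (List.mem_of_getElem? (hi i ▸ hQ))
    exact ⟨hs, by simpa using (hlen i).1 (PTree.hasNode_iff.2 ⟨Q, 1, hQ⟩), by simp [hlen]⟩

end Trees

section LeafProbabilities

variable {A : Proc Chan} {t : PTree Chan}

theorem IsSilentTree.pathProb_pos (h : IsSilentTree A t) :
    ∀ {σ : List ℕ}, t.hasNode σ → 0 < t.pathProb σ
  | [], _ => one_pos
  | i :: σ, hσ => by
    obtain ⟨Q, q, hQ⟩ := PTree.hasNode_iff.1 hσ
    obtain ⟨P, p, hP⟩ := PTree.hasNode_iff.1 (h.hasNode_of_cons hσ)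
    have hq : 0 < q := (h.2.2.2.2 σ i P p Q q hP hQ).1
    have hσ' := h.pathProb_pos (h.hasNode_of_cons hσ)
    simpa [PTree.pathProb, PTree.edgeProb, hQ] using mul_pos hq hσ'

theorem IsSilentTree.finite_setOf_length_le (h : IsSilentTree A t) (k : ℕ) :
    {σ | t.hasNode σ ∧ σ.length ≤ k}.Finite := by
  induction k with
  | zero => exact (finite_singleton []).subset fun σ hσ => by simpa using hσ.2
  | succ k ih =>
    have hchildren (σ : List ℕ) : {i | t.hasNode (i :: σ)}.Finite := by
      obtain ⟨n, hn⟩ := h.2.2.2.1 σ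
      exact (finite_lt_nat n).subset fun i hi => not_le.1 fun hni => hn i hni hi
    refine ((ih.biUnion fun σ _ => (hchildren σ).image (· :: σ)).insert []).subset ?_
    rintro (_ | ⟨i, σ⟩) ⟨hσ, hlen⟩
    · exact mem_insert _ _
    · exact .inr <| mem_biUnion (x := σ) ⟨h.hasNode_of_cons hσ, by simpa using hlen⟩ ⟨i, hσ, rfl⟩

/-- The contribution of the address `σ` to the total probability of finite branches of `t`. -/
def PTree.leafProb (t : PTree Chan) (σ : List ℕ) : ℝ := if t.IsLeaf σ then t.pathProb σ else 0

theorem IsSilentTree.leafProb_nonneg (h : IsSilentTree A t) (σ : List ℕ) : 0 ≤ t.leafProb σ := by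
  rw [PTree.leafProb]
  split_ifs with hσ
  exacts [(h.pathProb_pos hσ.1).le, le_rfl]

theorem PTree.finBranchProb_eq_tsum_indicator (t : PTree Chan) (k : ℕ) :
    t.finBranchProb k = ∑' σ, {σ : List ℕ | σ.length ≤ k}.indicator t.leafProb σ := by
  refine tsum_congr fun σ => ?_
  by_cases hσ : t.IsLeaf σ <;> simp [leafProb, indicator, hσ]

theorem IsSilentTree.summable_indicator_leafProb (h : IsSilentTree A t) (k : ℕ) :
    Summable ({σ : List ℕ | σ.length ≤ k}.indicator t.leafProb) := by
  refine summable_of_hasFiniteSupport ((h.finite_setOf_length_le k).subset fun σ hσ => ?_)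
  obtain ⟨hlen, hprob⟩ := indicator_apply_ne_zero.1 hσ
  exact ⟨(ite_ne_right_iff.1 hprob).1.1, hlen⟩

theorem IsSilentTree.monotone_finBranchProb (h : IsSilentTree A t) : Monotone t.finBranchProb := by
  intro j k hjk
  simp only [PTree.finBranchProb_eq_tsum_indicator]
  exact (h.summable_indicator_leafProb j).tsum_le_tsum
    (fun σ => indicator_le_indicator_of_subset (fun _ hσ => hσ.trans hjk) h.leafProb_nonneg σ)
    (h.summable_indicator_leafProb k)

theorem IsSilentTree.sum_leafProb_le_finBranchProb (h : IsSilentTree A t) (s : Finset (List ℕ)) :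
    ∑ σ ∈ s, t.leafProb σ ≤ t.finBranchProb (s.sup List.length) := by
  rw [PTree.finBranchProb_eq_tsum_indicator]
  refine (Finset.sum_congr rfl fun σ hσ => ?_).trans_le <|
    (h.summable_indicator_leafProb _).sum_le_tsum s fun σ _ =>
      indicator_nonneg (fun τ _ => h.leafProb_nonneg τ) σ
  exact (indicator_of_mem (s := {σ : List ℕ | σ.length ≤ s.sup List.length})
    (Finset.le_sup (f := List.length) hσ) _).symm

theorem IsSilentTree.tendsto_finBranchProb (h : IsSilentTree A t) (hs : Summable t.leafProb) :
    Tendsto t.finBranchProb atTop (nhds (∑' σ, t.leafProb σ)) := by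
  simp only [funext t.finBranchProb_eq_tsum_indicator]
  refine tendsto_tsum_of_dominated_convergence hs (fun σ => ?_) (.of_forall fun k σ => ?_)
  · refine tendsto_const_nhds.congr' ?_
    filter_upwards [eventually_ge_atTop σ.length] with k hk
    exact (indicator_of_mem (s := {σ : List ℕ | σ.length ≤ k}) hk _).symm
  · rw [Real.norm_of_nonneg (indicator_nonneg (fun τ _ => h.leafProb_nonneg τ) σ)]
    exact indicator_le_self' (fun _ _ => h.leafProb_nonneg _) σ

theorem IsSilentTree.tendsto_finBranchProb_iff (h : IsSilentTree A t) {x : ℝ} :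
    Tendsto t.finBranchProb atTop (nhds x) ↔ HasSum t.leafProb x := by
  refine ⟨fun hx => ?_, fun hx => hx.tsum_eq ▸ h.tendsto_finBranchProb hx.summable⟩
  have hs : Summable t.leafProb := summable_of_sum_le h.leafProb_nonneg fun s =>
    (h.sum_leafProb_le_finBranchProb s).trans (h.monotone_finBranchProb.ge_of_tendsto hx _)
  exact tendsto_nhds_unique (h.tendsto_finBranchProb hs) hx ▸ hs.hasSum

theorem IsSilentTree.regular_iff_hasSum (h : IsSilentTree A t) :
    t.Regular ↔ HasSum t.leafProb 1 :=
  h.tendsto_finBranchProb_iff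

theorem IsSilentTree.divergent_iff_forall_not_isLeaf (h : IsSilentTree A t) :
    t.Divergent ↔ ∀ σ, ¬ t.IsLeaf σ := by
  rw [PTree.Divergent, h.tendsto_finBranchProb_iff, hasSum_zero_iff_of_nonneg h.leafProb_nonneg,
    funext_iff]
  refine forall_congr' fun σ => ?_
  rw [PTree.leafProb, Pi.zero_apply, ite_eq_right_iff]
  exact ⟨fun hσ hleaf => (h.pathProb_pos hleaf.1).ne' (hσ hleaf), fun hσ hleaf => (hσ hleaf).elim⟩

theorem IsSilentTree.exists_isLeaf (h : IsSilentTree A t) (ht : t.Regular) : ∃ σ, t.IsLeaf σ := by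
  by_contra! hleaf
  exact zero_ne_one
    (tendsto_nhds_unique (h.divergent_iff_forall_not_isLeaf.2 hleaf) ht)

end LeafProbabilities

section Unfolding

variable {E : Proc Chan → Proc Chan → Prop} {A : Proc Chan} {X : Set (Proc Chan)}
  {l : Proc Chan → List (Proc Chan × ℝ)}

/-- The tree with root `A` in which every node labeled `P` has the children `l P`. -/
def PTree.unfold (A : Proc Chan) (l : Proc Chan → List (Proc Chan × ℝ)) : PTree Chan where
  node σ := σ.foldr (fun i x => x.bind fun y => (l y.1)[i]?) (some (A, 1))

theorem PTree.unfold_node_cons (i : ℕ) (σ : List ℕ) :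
    (unfold A l).node (i :: σ) = ((unfold A l).node σ).bind fun y => (l y.1)[i]? :=
  rfl

theorem PTree.unfold_node_mem (hA : A ∈ X) (hl : ∀ P ∈ X, ∀ y ∈ l P, y.1 ∈ X) :
    ∀ {σ : List ℕ} {P : Proc Chan} {p : ℝ}, (unfold A l).node σ = some (P, p) → P ∈ X
  | [], P, p, h => by
    obtain ⟨rfl, -⟩ := Prod.mk.inj (Option.some.inj h)
    exact hA
  | i :: σ, P, p, h => by
    obtain ⟨⟨Q, q⟩, hQ, hP⟩ := Option.bind_eq_some_iff.1 h
    exact hl Q (unfold_node_mem hA hl hQ) _ (List.mem_of_getElem? hP)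

theorem PTree.isETree_unfold (hA : A ∈ X) (hX : X ⊆ classOf E A)
    (hexp : ∀ P ∈ X, Expansion P (l P)) (hl : ∀ P ∈ X, ∀ y ∈ l P, y.1 ∈ X) :
    IsETree E A (unfold A l) := by
  refine .of_expansion rfl (fun i σ h => ?_) fun σ P p h => ?_
  · obtain ⟨y, hy, -⟩ := Option.bind_eq_some_iff.1 (Option.some_get h).symm
    exact hasNode_iff.2 ⟨y.1, y.2, hy⟩
  · have hP := unfold_node_mem hA hl h
    exact ⟨hX hP, l P, hexp P hP, fun i => by simp [unfold_node_cons, h]⟩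

theorem PTree.regular_unfold_nil : (unfold A fun _ => []).Regular := by
  have htree : IsETree Eq A (unfold A fun _ => []) :=
    isETree_unfold (mem_singleton A) (fun _ h => h.symm) (fun P _ => .leaf P) (by simp)
  have hcons (i : ℕ) (σ : List ℕ) : ¬ (unfold A fun _ => []).hasNode (i :: σ) := by
    simp [hasNode, unfold_node_cons]
  have hroot : (unfold A fun _ => []).leafProb [] = 1 := if_pos ⟨rfl, hcons 0 []⟩
  refine htree.1.regular_iff_hasSum.2 (hroot ▸ hasSum_single [] fun σ hσ => if_neg fun h => ?_)
  obtain ⟨i, τ, rfl⟩ := List.exists_cons_of_ne_nil hσ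
  exact hcons i τ h.1

end Unfolding

/-- For equivalences `E₁` and `E₂`, the equivalence generated by the pairs `(A|C, B|D)` with
`E₁ A B` and `E₂ C D`: classes of compositions are products, other processes are isolated. -/
inductive ParRel (E₁ E₂ : Proc Chan → Proc Chan → Prop) : Proc Chan → Proc Chan → Prop
  | refl (P : Proc Chan) : ParRel E₁ E₂ P P
  | par {A B C D : Proc Chan} : E₁ A B → E₂ C D → ParRel E₁ E₂ (A.par C) (B.par D)

section ParallelGrafting

variable {E₁ E₂ : Proc Chan → Proc Chan → Prop} {A C : Proc Chan} {t u : PTree Chan}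

namespace PTree

/-- The addresses in `t` and in `u` reached by following an address of `t.par u`: it is followed
in `t` until a leaf is met, and in `u` from there on. -/
def splitAddr (t : PTree Chan) : List ℕ → List ℕ × List ℕ
  | [] => ([], [])
  | i :: σ =>
    if t.hasNode (0 :: (t.splitAddr σ).1) then (i :: (t.splitAddr σ).1, (t.splitAddr σ).2)
    else ((t.splitAddr σ).1, i :: (t.splitAddr σ).2)

/-- The tree running `t` in the left component and then, from every leaf of `t`, running `u` in
the right component. -/
def par (t u : PTree Chan) : PTree Chan where
  node σ := (t.node (t.splitAddr σ).1).bind fun x => (u.node (t.splitAddr σ).2).map fun y =>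
    (x.1.par y.1, if (t.splitAddr σ).2 = [] then x.2 else y.2)

theorem splitAddr_cons_of_hasNode {σ : List ℕ} (h : t.hasNode (0 :: (t.splitAddr σ).1)) (i : ℕ) :
    t.splitAddr (i :: σ) = (i :: (t.splitAddr σ).1, (t.splitAddr σ).2) :=
  if_pos h

theorem splitAddr_cons_of_not_hasNode {σ : List ℕ} (h : ¬ t.hasNode (0 :: (t.splitAddr σ).1))
    (i : ℕ) : t.splitAddr (i :: σ) = ((t.splitAddr σ).1, i :: (t.splitAddr σ).2) :=
  if_neg h

theorem splitAddr_snd_eq_nil :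
    ∀ {σ : List ℕ}, t.hasNode (0 :: (t.splitAddr σ).1) → (t.splitAddr σ).2 = []
  | [], _ => rfl
  | i :: σ, h => by
    by_cases hσ : t.hasNode (0 :: (t.splitAddr σ).1)
    · rw [splitAddr_cons_of_hasNode hσ]
      exact splitAddr_snd_eq_nil hσ
    · rw [splitAddr_cons_of_not_hasNode hσ] at h
      exact (hσ h).elim

theorem splitAddr_append (t : PTree Chan) :
    ∀ σ : List ℕ, (t.splitAddr σ).2 ++ (t.splitAddr σ).1 = σ
  | [] => rfl
  | i :: σ => by
    have ih := t.splitAddr_append σ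
    by_cases hσ : t.hasNode (0 :: (t.splitAddr σ).1)
    · rw [splitAddr_snd_eq_nil hσ, List.nil_append] at ih
      rw [splitAddr_cons_of_hasNode hσ, splitAddr_snd_eq_nil hσ, List.nil_append, ih]
    · rw [splitAddr_cons_of_not_hasNode hσ, List.cons_append, ih]

theorem splitAddr_injective : Function.Injective t.splitAddr := fun σ τ h => by
  rw [← t.splitAddr_append σ, ← t.splitAddr_append τ, h]

theorem splitAddr_of_hasNode (ht : IsSilentTree A t) :
    ∀ {σ : List ℕ}, t.hasNode σ → t.splitAddr σ = (σ, [])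
  | [], _ => rfl
  | i :: σ, h => by
    have hσ := splitAddr_of_hasNode ht (ht.hasNode_of_cons h)
    rw [splitAddr_cons_of_hasNode (by rw [hσ]; exact ht.2.2.1 i 0 σ i.zero_le h), hσ]

theorem splitAddr_append_of_isLeaf (ht : IsSilentTree A t) {σ : List ℕ} (h : t.IsLeaf σ) :
    ∀ τ : List ℕ, t.splitAddr (τ ++ σ) = (σ, τ)
  | [] => splitAddr_of_hasNode ht h.1
  | i :: τ => by
    have hτ := splitAddr_append_of_isLeaf ht h τ
    rw [List.cons_append, splitAddr_cons_of_not_hasNode (by rw [hτ]; exact h.2), hτ]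

theorem par_node_cons_left {σ : List ℕ} {Q : Proc Chan} {q : ℝ}
    (h : t.hasNode (0 :: (t.splitAddr σ).1)) (hQ : u.node (t.splitAddr σ).2 = some (Q, q)) (i : ℕ) :
    (t.par u).node (i :: σ) = (t.node (i :: (t.splitAddr σ).1)).map (Prod.map (·.par Q) id) := by
  rw [splitAddr_snd_eq_nil h] at hQ
  simp [par, splitAddr_cons_of_hasNode h, splitAddr_snd_eq_nil h, hQ, Prod.map_def,
    Option.map_eq_bind]

theorem par_node_cons_right {σ : List ℕ} {P : Proc Chan} {p : ℝ}
    (h : ¬ t.hasNode (0 :: (t.splitAddr σ).1)) (hP : t.node (t.splitAddr σ).1 = some (P, p))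
    (i : ℕ) :
    (t.par u).node (i :: σ) = (u.node (i :: (t.splitAddr σ).2)).map (Prod.map P.par id) := by
  simp [par, splitAddr_cons_of_not_hasNode h, hP, Prod.map_def]

theorem exists_node_of_par_node {σ : List ℕ} {R : Proc Chan} {r : ℝ}
    (h : (t.par u).node σ = some (R, r)) :
    ∃ P p Q q, t.node (t.splitAddr σ).1 = some (P, p) ∧ u.node (t.splitAddr σ).2 = some (Q, q) ∧
      R = P.par Q := by
  obtain ⟨⟨P, p⟩, hP, hR⟩ := Option.bind_eq_some_iff.1 h
  obtain ⟨⟨Q, q⟩, hQ, hR⟩ := Option.map_eq_some_iff.1 hR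
  exact ⟨P, p, Q, q, hP, hQ, (congrArg Prod.fst hR).symm⟩

theorem hasNode_par_iff {σ : List ℕ} :
    (t.par u).hasNode σ ↔ t.hasNode (t.splitAddr σ).1 ∧ u.hasNode (t.splitAddr σ).2 := by
  simp only [hasNode, par]
  cases t.node (t.splitAddr σ).1 <;> simp

theorem isLeaf_par_iff (hu : u.hasNode []) {σ : List ℕ} :
    (t.par u).IsLeaf σ ↔ t.IsLeaf (t.splitAddr σ).1 ∧ u.IsLeaf (t.splitAddr σ).2 := by
  by_cases hσ : t.hasNode (0 :: (t.splitAddr σ).1)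
  · simp [IsLeaf, hasNode_par_iff, splitAddr_cons_of_hasNode hσ, splitAddr_snd_eq_nil hσ, hσ, hu]
  · simp only [IsLeaf, hasNode_par_iff, splitAddr_cons_of_not_hasNode hσ, hσ]
    tauto

theorem pathProb_eq_zero (ht : t.hasNode []) {σ : List ℕ} (hσ : ¬ t.hasNode σ) :
    t.pathProb σ = 0 := by
  cases σ with
  | nil => exact (hσ ht).elim
  | cons i σ =>
    have hnone : t.node (i :: σ) = none := by simpa [hasNode] using hσ
    simp [pathProb, edgeProb, hnone]

theorem pathProb_par (ht : t.hasNode []) (hu : u.hasNode []) :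
    ∀ σ, (t.par u).pathProb σ = t.pathProb (t.splitAddr σ).1 * u.pathProb (t.splitAddr σ).2
  | [] => (mul_one 1).symm
  | i :: σ => by
    rw [pathProb, pathProb_par ht hu σ]
    by_cases hσ : t.hasNode (0 :: (t.splitAddr σ).1)
    · obtain ⟨Q, q, hQ⟩ := hasNode_iff.1 hu
      rw [← splitAddr_snd_eq_nil hσ] at hQ
      simp [edgeProb, par_node_cons_left hσ hQ, splitAddr_cons_of_hasNode hσ, pathProb, mul_assoc,
        Function.comp_def]
    · by_cases hnode : t.hasNode (t.splitAddr σ).1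
      · obtain ⟨P, p, hP⟩ := hasNode_iff.1 hnode
        simp [edgeProb, par_node_cons_right hσ hP, splitAddr_cons_of_not_hasNode hσ, pathProb,
          mul_left_comm, Function.comp_def]
      · simp [pathProb_eq_zero ht hnode, splitAddr_cons_of_not_hasNode hσ]

theorem leafProb_par (ht : t.hasNode []) (hu : u.hasNode []) (σ : List ℕ) :
    (t.par u).leafProb σ = t.leafProb (t.splitAddr σ).1 * u.leafProb (t.splitAddr σ).2 := by
  simp only [leafProb, isLeaf_par_iff hu, pathProb_par ht hu, ite_zero_mul_ite_zero]

end PTree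

theorem IsETree.par (ht : IsETree E₁ A t) (hu : IsETree E₂ C u) :
    IsETree (ParRel E₁ E₂) (A.par C) (t.par u) := by
  refine .of_expansion ?_ (fun i σ h => ?_) fun σ R r h => ?_
  · simp [PTree.par, PTree.splitAddr, ht.1.1, hu.1.1]
  · rw [PTree.hasNode_par_iff] at h ⊢
    by_cases hσ : t.hasNode (0 :: (t.splitAddr σ).1)
    · rw [PTree.splitAddr_cons_of_hasNode hσ] at h
      exact h.imp_left ht.1.hasNode_of_cons
    · rw [PTree.splitAddr_cons_of_not_hasNode hσ] at h
      exact h.imp_right hu.1.hasNode_of_cons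
  · obtain ⟨P, p, Q, q, hP, hQ, rfl⟩ := PTree.exists_node_of_par_node h
    refine ⟨.par (ht.2.1 _ _ _ hP) (hu.2.1 _ _ _ hQ), ?_⟩
    by_cases hσ : t.hasNode (0 :: (t.splitAddr σ).1)
    · obtain ⟨l, hl, hchild⟩ := ht.exists_expansion hP
      exact ⟨_, hl.par_left Q, fun i => by
        rw [PTree.par_node_cons_left hσ hQ, hchild, List.getElem?_map]⟩
    · obtain ⟨l, hl, hchild⟩ := hu.exists_expansion hQ
      exact ⟨_, hl.par_right P, fun i => by
        rw [PTree.par_node_cons_right hσ hP, hchild, List.getElem?_map]⟩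

theorem IsETree.regular_par (ht : IsETree E₁ A t) (hu : IsETree E₂ C u) (htr : t.Regular)
    (hur : u.Regular) : (t.par u).Regular := by
  have hroot_t : t.hasNode [] := ht.1.hasNode_nil
  have hroot_u : u.hasNode [] := hu.1.hasNode_nil
  have hprod : HasSum (fun x : List ℕ × List ℕ => t.leafProb x.1 * u.leafProb x.2) 1 := by
    have htsum := ht.1.regular_iff_hasSum.1 htr
    have husum := hu.1.regular_iff_hasSum.1 hur
    simpa using htsum.mul husum (htsum.summable.mul_of_nonneg husum.summable
      ht.1.leafProb_nonneg hu.1.leafProb_nonneg)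
  refine (ht.par hu).1.regular_iff_hasSum.2 ?_
  rw [funext (PTree.leafProb_par hroot_t hroot_u)]
  refine (PTree.splitAddr_injective.hasSum_iff fun x hx => ?_).2 hprod
  by_cases hleaf : t.IsLeaf x.1
  · exact (hx ⟨x.2 ++ x.1, PTree.splitAddr_append_of_isLeaf ht.1 hleaf x.2⟩).elim
  · simp [PTree.leafProb, hleaf]

end ParallelGrafting

section Equivalences

variable {E E₁ E₂ : Proc Chan → Proc Chan → Prop} {A B C : Proc Chan}

theorem mem_classOf_self (hE : Equivalence E) (A : Proc Chan) : A ∈ classOf E A :=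
  hE.refl A

theorem classOf_eq_classOf (hE : Equivalence E) : classOf E A = classOf E B ↔ E A B :=
  ⟨fun h => show B ∈ classOf E A from h ▸ mem_classOf_self hE B,
    fun h => ext fun _ => ⟨hE.trans (hE.symm h), hE.trans h⟩⟩

theorem IsClass.eq_classOf (hE : Equivalence E) {K : Set (Proc Chan)} (hK : IsClass E K)
    (hA : A ∈ K) : K = classOf E A := by
  obtain ⟨B, rfl⟩ := hK
  exact (classOf_eq_classOf hE).2 hA

theorem ParRel.equivalence (h₁ : Equivalence E₁) (h₂ : Equivalence E₂) :
    Equivalence (ParRel E₁ E₂) where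
  refl := .refl
  symm h := by
    cases h with
    | refl => exact .refl _
    | par hAB hCD => exact .par (h₁.symm hAB) (h₂.symm hCD)
  trans {P Q R} hPQ hQR := by
    cases hPQ with
    | refl => exact hQR
    | @par A B C D hAB hCD =>
      generalize hQ : B.par D = Q at hQR
      cases hQR with
      | refl => exact hQ ▸ .par hAB hCD
      | par hBX hDY =>
        obtain ⟨rfl, rfl⟩ := Proc.par_injective2 hQ
        exact .par (h₁.trans hAB hBX) (h₂.trans hCD hDY)

theorem classOf_parRel_par (h₁ : Equivalence E₁) (h₂ : Equivalence E₂) :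
    classOf (ParRel E₁ E₂) (A.par C) = image2 Proc.par (classOf E₁ A) (classOf E₂ C) := by
  ext R
  constructor
  · intro (h : ParRel E₁ E₂ (A.par C) R)
    generalize hP : A.par C = P at h
    cases h with
    | refl => exact hP ▸ mem_image2_of_mem (mem_classOf_self h₁ A) (mem_classOf_self h₂ C)
    | par hB hD =>
      obtain ⟨rfl, rfl⟩ := Proc.par_injective2 hP
      exact mem_image2_of_mem hB hD
  · rintro ⟨B, hB, D, hD, rfl⟩
    exact .par hB hD

end Equivalences

section WeakTransitions

variable {E E₁ E₂ : Proc Chan → Proc Chan → Prop} {A C : Proc Chan} {S S' T : Set (Proc Chan)}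

/-- Some regular ε-tree of `A` has all its leaves labeled in `S`. Both `LTrans` and `QTrans` are of
this form, with `S` equal to `stepsInto l K` and `collectiveInto (classOf E A) q K`. -/
def Reaches (E : Proc Chan → Proc Chan → Prop) (A : Proc Chan) (S : Set (Proc Chan)) : Prop :=
  ∃ t, IsETree E A t ∧ t.Regular ∧
    ∀ σ L p, t.node σ = some (L, p) → ¬ t.hasNode (0 :: σ) → L ∈ S

/-- The processes having an `l`-transition into `K`. -/
def stepsInto (l : Lab Chan) (K : Set (Proc Chan)) : Set (Proc Chan) :=
  {L | ∃ L' ∈ K, Step L.val l L'.val}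

/-- The paper's weighted probability of reaching `K` by a collective silent transition out of the
class `K₀`: the probability of reaching `K` conditioned on leaving `K₀`. -/
def weightedProb (K₀ K : Set (Proc Chan)) {n : ℕ} (p : Fin n → ℝ) (U : Fin n → Tm Chan) : ℝ :=
  collProb K p U / (1 - collProb K₀ p U)

/-- The processes having a collective silent transition that reaches `K` with probability `q`
weighted with regard to `K₀`. -/
def collectiveInto (K₀ : Set (Proc Chan)) (q : ℝ) (K : Set (Proc Chan)) : Set (Proc Chan) :=
  {L | ∃ (n : ℕ) (p : Fin n → ℝ) (U : Fin n → Tm Chan),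
    CStep L.val n p U ∧ weightedProb K₀ K p U = q}

namespace Reaches

theorem self (hE : Equivalence E) (hA : A ∈ S) : Reaches E A S := by
  refine ⟨_, PTree.isETree_unfold (mem_singleton A) (singleton_subset_iff.2 (hE.refl A))
    (fun P _ => .leaf P) (by simp), PTree.regular_unfold_nil, fun σ L p h _ => ?_⟩
  obtain rfl := PTree.unfold_node_mem (mem_singleton A) (by simp) h
  exact hA

theorem mono (h : Reaches E A S) (hS : S ⊆ S') : Reaches E A S' := by
  obtain ⟨t, ht, hreg, hleaf⟩ := h
  exact ⟨t, ht, hreg, fun σ L p hσ h0 => hS (hleaf σ L p hσ h0)⟩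

theorem exists_mem (h : Reaches E A S) : ∃ L ∈ S, E A L := by
  obtain ⟨t, ht, hreg, hleaf⟩ := h
  obtain ⟨σ, hσ, h0⟩ := ht.1.exists_isLeaf hreg
  obtain ⟨L, p, hL⟩ := PTree.hasNode_iff.1 hσ
  exact ⟨L, hleaf σ L p hL h0, ht.2.1 σ L p hL⟩

theorem par (hA : Reaches E₁ A S) (hC : Reaches E₂ C T) :
    Reaches (ParRel E₁ E₂) (A.par C) (image2 Proc.par S T) := by
  obtain ⟨t, ht, htr, htS⟩ := hA
  obtain ⟨u, hu, hur, huT⟩ := hC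
  refine ⟨t.par u, ht.par hu, ht.regular_par hu htr hur, fun σ R r hR h0 => ?_⟩
  obtain ⟨P, p, Q, q, hP, hQ, rfl⟩ := PTree.exists_node_of_par_node hR
  have hroot : u.hasNode [] := hu.1.hasNode_nil
  obtain ⟨⟨-, ht0⟩, -, hu0⟩ :=
    (PTree.isLeaf_par_iff hroot).1 ⟨PTree.hasNode_iff.2 ⟨_, r, hR⟩, h0⟩
  exact mem_image2_of_mem (htS _ P p hP ht0) (huT _ Q q hQ hu0)

end Reaches

end WeakTransitions

section ProductClasses

variable {K₁ K₂ K₁' K₂' : Set (Proc Chan)} {A C : Proc Chan} {l : Lab Chan} {q : ℝ} {n : ℕ}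
  {p : Fin n → ℝ} {U : Fin n → Tm Chan}

theorem image2_par_stepsInto_left :
    image2 Proc.par (stepsInto l K₁) K₂ ⊆ stepsInto l (image2 Proc.par K₁ K₂) := by
  rintro _ ⟨P, ⟨P', hP', hs⟩, Q, hQ, rfl⟩
  exact ⟨P'.par Q, mem_image2_of_mem hP' hQ, .parL hs⟩

theorem image2_par_stepsInto_right :
    image2 Proc.par K₁ (stepsInto l K₂) ⊆ stepsInto l (image2 Proc.par K₁ K₂) := by
  rintro _ ⟨P, hP, Q, ⟨Q', hQ', hs⟩, rfl⟩
  exact ⟨P.par Q', mem_image2_of_mem hP hQ', .parR hs⟩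

theorem image2_par_stepsInto_guardLab (α : Chan ⊕ Chan) :
    image2 Proc.par (stepsInto (guardLab α) K₁) (stepsInto (guardLab α.swap) K₂) ⊆
      stepsInto (.tau 1) (image2 Proc.par K₁ K₂) := by
  rintro _ ⟨P, ⟨P', hP', hs⟩, Q, ⟨Q', hQ', hs'⟩, rfl⟩
  exact ⟨P'.par Q', mem_image2_of_mem hP' hQ', Handshake.step ⟨α, hs, hs'⟩⟩

theorem inC_image2_par_left (hC : C ∈ K₂) {S : Tm Chan} :
    inC (image2 Proc.par K₁ K₂) (.par S C.val) ↔ inC K₁ S := by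
  constructor
  · rintro ⟨_, ⟨P, hP, Q, -, rfl⟩, h⟩
    exact ⟨P, hP, (Tm.par.inj h).1⟩
  · rintro ⟨P, hP, rfl⟩
    exact ⟨P.par C, mem_image2_of_mem hP hC, rfl⟩

theorem inC_image2_par_right (hA : A ∈ K₁) {T : Tm Chan} :
    inC (image2 Proc.par K₁ K₂) (.par A.val T) ↔ inC K₂ T := by
  constructor
  · rintro ⟨_, ⟨P, -, Q, hQ, rfl⟩, h⟩
    exact ⟨Q, hQ, (Tm.par.inj h).2⟩
  · rintro ⟨Q, hQ, rfl⟩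
    exact ⟨A.par Q, mem_image2_of_mem hA hQ, rfl⟩

theorem weightedProb_image2_par_left (hC : C ∈ K₂) :
    weightedProb (image2 Proc.par K₁ K₂) (image2 Proc.par K₁' K₂) p (fun i => .par (U i) C.val) =
      weightedProb K₁ K₁' p U := by
  simp only [weightedProb, collProb, inC_image2_par_left hC]

theorem weightedProb_image2_par_right (hA : A ∈ K₁) :
    weightedProb (image2 Proc.par K₁ K₂) (image2 Proc.par K₁ K₂') p (fun i => .par A.val (U i)) =
      weightedProb K₂ K₂' p U := by
  simp only [weightedProb, collProb, inC_image2_par_right hA]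

theorem image2_par_collectiveInto_left :
    image2 Proc.par (collectiveInto K₁ q K₁') K₂ ⊆
      collectiveInto (image2 Proc.par K₁ K₂) q (image2 Proc.par K₁' K₂) := by
  rintro _ ⟨P, ⟨n, p, U, hs, rfl⟩, Q, hQ, rfl⟩
  exact ⟨n, p, _, .parL hs, weightedProb_image2_par_left hQ⟩

theorem image2_par_collectiveInto_right :
    image2 Proc.par K₁ (collectiveInto K₂ q K₂') ⊆
      collectiveInto (image2 Proc.par K₁ K₂) q (image2 Proc.par K₁ K₂') := by
  rintro _ ⟨P, hP, Q, ⟨n, p, U, hs, rfl⟩, rfl⟩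
  exact ⟨n, p, _, .parR hs, weightedProb_image2_par_right hP⟩

theorem exists_inC_of_collProb_ne_zero (h : collProb K₁ p U ≠ 0) : ∃ i, inC K₁ (U i) := by
  obtain ⟨i, -, hi⟩ := Finset.exists_ne_zero_of_sum_ne_zero h
  exact ⟨i, (ite_ne_right_iff.1 hi).1⟩

end ProductClasses

section Bisimulation

variable {E E₁ E₂ : Proc Chan → Proc Chan → Prop} {P Q P' : Proc Chan}

theorem IsBB.reaches_stepsInto (hE : IsBB E) {l : Lab Chan} (hl : l.IsAct) (hPQ : E P Q)
    (hne : l ≠ .tau 1 ∨ ¬ E P P') (hs : Step P.val l P'.val) :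
    Reaches E Q (stepsInto l (classOf E P')) :=
  hE.2.1 P Q l (classOf E P') hl ⟨P', rfl⟩ hPQ
    (hne.imp_right (mt fun h => (classOf_eq_classOf hE.1).1 h.symm))
    (Reaches.self (S := stepsInto l (classOf E P')) hE.1 ⟨P', mem_classOf_self hE.1 P', hs⟩)

theorem IsBB.reaches_collectiveInto (hE : IsBB E) {n : ℕ} {p : Fin n → ℝ} {U : Fin n → Tm Chan}
    (hPQ : E P Q) (hne : ¬ E P P') (hs : CStep P.val n p U)
    (hpos : 0 < weightedProb (classOf E P) (classOf E P') p U)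
    (hle : weightedProb (classOf E P) (classOf E P') p U ≤ 1) :
    Reaches E Q (collectiveInto (classOf E P) (weightedProb (classOf E P) (classOf E P') p U)
      (classOf E P')) := by
  nth_rw 1 [(classOf_eq_classOf hE.1).2 hPQ]
  exact hE.2.2 P Q _ (classOf E P') hpos hle ⟨P', rfl⟩ hPQ
    (mt (fun h => (classOf_eq_classOf hE.1).1 h.symm) hne)
    (Reaches.self (S := collectiveInto _ _ _) hE.1 ⟨n, p, U, hs, rfl⟩)

theorem isBB_of_step (hE : Equivalence E)
    (hstep : ∀ P Q P' l, l.IsAct → E P Q → (l ≠ .tau 1 ∨ ¬ E P P') → Step P.val l P'.val →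
      Reaches E Q (stepsInto l (classOf E P')))
    (hcoll : ∀ P Q P' n (p : Fin n → ℝ) U i, E P Q → ¬ E P P' → CStep P.val n p U →
      U i = P'.val → 0 < weightedProb (classOf E P) (classOf E P') p U →
      weightedProb (classOf E P) (classOf E P') p U ≤ 1 →
      Reaches E Q (collectiveInto (classOf E P)
        (weightedProb (classOf E P) (classOf E P') p U) (classOf E P'))) : IsBB E := by
  refine ⟨hE, fun A B l K hl hK hAB hne (h : Reaches E A (stepsInto l K)) => ?_,
    fun A B q K hpos hle hK hAB hne (h : Reaches E A (collectiveInto (classOf E A) q K)) => ?_⟩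
  · obtain ⟨L, ⟨L', hL', hs⟩, hAL⟩ := h.exists_mem
    obtain rfl := hK.eq_classOf hE hL'
    rw [(classOf_eq_classOf hE).2 hAL] at hne
    exact hstep L B L' l hl (hE.trans (hE.symm hAL) hAB)
      (hne.imp_right (mt fun h => ((classOf_eq_classOf hE).2 h).symm)) hs
  · obtain ⟨L, ⟨n, p, U, hs, rfl⟩, hAL⟩ := h.exists_mem
    obtain ⟨i, L', hL', hi⟩ := exists_inC_of_collProb_ne_zero (div_ne_zero_iff.1 hpos.ne').1
    obtain rfl := hK.eq_classOf hE hL'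
    have hLB := hE.trans (hE.symm hAL) hAB
    rw [(classOf_eq_classOf hE).2 hAL] at hpos hle hne ⊢
    have hreach := hcoll L B L' n p U i hLB
      (mt (fun h => ((classOf_eq_classOf hE).2 h).symm) hne) hs hi.symm hpos hle
    nth_rw 1 [(classOf_eq_classOf hE).2 hLB] at hreach
    exact hreach

theorem reaches_stepsInto_parRel (h₁ : IsBB E₁) (h₂ : IsBB E₂) {l : Lab Chan} (hl : l.IsAct)
    (hPQ : ParRel E₁ E₂ P Q) (hne : l ≠ .tau 1 ∨ ¬ ParRel E₁ E₂ P P')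
    (hs : Step P.val l P'.val) :
    Reaches (ParRel E₁ E₂) Q (stepsInto l (classOf (ParRel E₁ E₂) P')) := by
  cases hPQ with
  | refl => exact .self (ParRel.equivalence h₁.1 h₂.1) ⟨P', .refl P', hs⟩
  | @par A B C D hAB hCD =>
    obtain ⟨A', rfl, hA⟩ | ⟨C', rfl, hC⟩ | ⟨rfl, A', C', rfl, α, hA, hC⟩ := hs.par_cases <;>
      rw [classOf_parRel_par h₁.1 h₂.1]
    · have hB := h₁.reaches_stepsInto hl hAB
        (hne.imp_right (mt fun h => .par h (h₂.1.refl C))) hA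
      have hD : Reaches E₂ D (classOf E₂ C) := .self h₂.1 hCD
      exact (hB.par hD).mono image2_par_stepsInto_left
    · have hB : Reaches E₁ B (classOf E₁ A) := .self h₁.1 hAB
      have hD := h₂.reaches_stepsInto hl hCD
        (hne.imp_right (mt fun h => .par (h₁.1.refl A) h)) hC
      exact (hB.par hD).mono image2_par_stepsInto_right
    · have hB := h₁.reaches_stepsInto (guardLab_isAct α) hAB (.inl (guardLab_ne_tau α 1)) hA
      have hD := h₂.reaches_stepsInto (guardLab_isAct _) hCD (.inl (guardLab_ne_tau _ 1)) hC
      exact (hB.par hD).mono (image2_par_stepsInto_guardLab α)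

theorem reaches_collectiveInto_parRel (h₁ : IsBB E₁) (h₂ : IsBB E₂) {n : ℕ} {p : Fin n → ℝ}
    {U : Fin n → Tm Chan} {i : Fin n} (hPQ : ParRel E₁ E₂ P Q) (hne : ¬ ParRel E₁ E₂ P P')
    (hs : CStep P.val n p U) (hi : U i = P'.val)
    (hpos : 0 < weightedProb (classOf (ParRel E₁ E₂) P) (classOf (ParRel E₁ E₂) P') p U)
    (hle : weightedProb (classOf (ParRel E₁ E₂) P) (classOf (ParRel E₁ E₂) P') p U ≤ 1) :
    Reaches (ParRel E₁ E₂) Q (collectiveInto (classOf (ParRel E₁ E₂) P)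
      (weightedProb (classOf (ParRel E₁ E₂) P) (classOf (ParRel E₁ E₂) P') p U)
      (classOf (ParRel E₁ E₂) P')) := by
  cases hPQ with
  | refl => exact .self (ParRel.equivalence h₁.1 h₂.1) ⟨n, p, U, hs, rfl⟩
  | @par A B C D hAB hCD =>
    obtain ⟨S, rfl, hS⟩ | ⟨T, rfl, hT⟩ := hs.par_cases
    · obtain ⟨A', -, rfl⟩ := Proc.exists_eq_par_left hi.symm
      simp only [classOf_parRel_par h₁.1 h₂.1] at hpos hle ⊢
      rw [weightedProb_image2_par_left (mem_classOf_self h₂.1 C)] at hpos hle ⊢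
      have hB := h₁.reaches_collectiveInto hAB (mt (fun h => .par h (h₂.1.refl C)) hne) hS hpos hle
      have hD : Reaches E₂ D (classOf E₂ C) := .self h₂.1 hCD
      exact (hB.par hD).mono image2_par_collectiveInto_left
    · obtain ⟨C', -, rfl⟩ := Proc.exists_eq_par_right hi.symm
      simp only [classOf_parRel_par h₁.1 h₂.1] at hpos hle ⊢
      rw [weightedProb_image2_par_right (mem_classOf_self h₁.1 A)] at hpos hle ⊢
      have hB : Reaches E₁ B (classOf E₁ A) := .self h₁.1 hAB
      have hD := h₂.reaches_collectiveInto hCD (mt (fun h => .par (h₁.1.refl A) h) hne) hT hpos hle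
      exact (hB.par hD).mono image2_par_collectiveInto_right

theorem IsBB.parRel (h₁ : IsBB E₁) (h₂ : IsBB E₂) : IsBB (ParRel E₁ E₂) :=
  isBB_of_step (ParRel.equivalence h₁.1 h₂.1)
    (fun _ _ _ _ hl hPQ hne hs => reaches_stepsInto_parRel h₁ h₂ hl hPQ hne hs)
    (fun _ _ _ _ _ _ _ hPQ hne hs hi => reaches_collectiveInto_parRel h₁ h₂ hPQ hne hs hi)

end Bisimulation

section Divergence

variable {E E₁ E₂ : Proc Chan → Proc Chan → Prop} {X Y K K₁ K₂ : Set (Proc Chan)}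
  {A B C D P Q : Proc Chan}

/-- A node labeled `P` can be given children, all labeled in `X`. -/
def CanMove (X : Set (Proc Chan)) (P : Proc Chan) : Prop :=
  ∃ l ≠ [], Expansion P l ∧ ∀ y ∈ l, y.1 ∈ X

/-- Silent moves can be performed forever from `P` within `K`. The coinductive predicate is encoded
by its post-fixed points `X`. -/
def DivergesIn (K : Set (Proc Chan)) (P : Proc Chan) : Prop :=
  ∃ X ⊆ K, P ∈ X ∧ ∀ R ∈ X, CanMove X R

namespace CanMove

theorem mono (h : CanMove X P) (hXY : X ⊆ Y) : CanMove Y P := by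
  obtain ⟨l, hne, hl, hX⟩ := h
  exact ⟨l, hne, hl, fun y hy => hXY (hX y hy)⟩

theorem par_left (h : CanMove K₁ P) (hQ : Q ∈ K₂) : CanMove (image2 Proc.par K₁ K₂) (P.par Q) := by
  obtain ⟨l, hne, hl, hK⟩ := h
  refine ⟨_, by simpa using hne, hl.par_left Q, List.forall_mem_map.2 fun y hy => ?_⟩
  exact mem_image2_of_mem (hK y hy) hQ

theorem par_right (hP : P ∈ K₁) (h : CanMove K₂ Q) : CanMove (image2 Proc.par K₁ K₂) (P.par Q) := by
  obtain ⟨l, hne, hl, hK⟩ := h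
  refine ⟨_, by simpa using hne, hl.par_right P, List.forall_mem_map.2 fun y hy => ?_⟩
  exact mem_image2_of_mem hP (hK y hy)

theorem par_cases (h : CanMove X (P.par Q)) :
    (∃ P' Q', Handshake P Q P' Q' ∧ P'.par Q' ∈ X) ∨
    CanMove {P' | P'.par Q ∈ X} P ∨ CanMove {Q' | P.par Q' ∈ X} Q := by
  obtain ⟨l, hne, hl, hX⟩ := h
  obtain ⟨P', Q', hPQ, rfl⟩ | ⟨l', hl', rfl⟩ | ⟨l', hl', rfl⟩ := hl.par_cases
  · exact .inl ⟨P', Q', hPQ, hX _ (List.mem_singleton_self _)⟩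
  · exact .inr (.inl ⟨l', by simpa using hne, hl', fun y hy => hX _ (List.mem_map_of_mem hy)⟩)
  · exact .inr (.inr ⟨l', by simpa using hne, hl', fun y hy => hX _ (List.mem_map_of_mem hy)⟩)

end CanMove

theorem Reaches.mem_or_canMove (h : Reaches E A X) : A ∈ X ∨ CanMove (classOf E A) A := by
  obtain ⟨t, ht, -, hleaf⟩ := h
  obtain ⟨l, hl, hchild⟩ := ht.exists_expansion ht.1.1
  by_cases hne : l = []
  · exact .inl (hleaf [] A 1 ht.1.1 (by simp [PTree.hasNode, hchild, hne]))
  · refine .inr ⟨l, hne, hl, fun y hy => ?_⟩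
    obtain ⟨i, hi⟩ := List.mem_iff_getElem?.1 hy
    exact ht.2.1 [i] y.1 y.2 ((hchild i).trans hi)

theorem DivergesIn.mem (h : DivergesIn K P) : P ∈ K := by
  obtain ⟨X, hXK, hP, -⟩ := h
  exact hXK hP

theorem DivergesIn.canMove (h : DivergesIn K P) : CanMove {R | DivergesIn K R} P := by
  obtain ⟨X, hXK, hP, hX⟩ := h
  exact (hX P hP).mono fun R hR => ⟨X, hXK, hR, hX⟩

theorem DivergesIn.par_left (h : DivergesIn K₁ P) (hQ : Q ∈ K₂) :
    DivergesIn (image2 Proc.par K₁ K₂) (P.par Q) := by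
  refine ⟨image2 Proc.par {R | DivergesIn K₁ R} {Q}, ?_, mem_image2_of_mem h rfl, ?_⟩
  · exact image2_subset (fun _ hR => hR.mem) (singleton_subset_iff.2 hQ)
  · rintro _ ⟨R, hR, _, rfl, rfl⟩
    exact hR.canMove.par_left rfl

theorem DivergesIn.par_right (hP : P ∈ K₁) (h : DivergesIn K₂ Q) :
    DivergesIn (image2 Proc.par K₁ K₂) (P.par Q) := by
  refine ⟨image2 Proc.par {P} {R | DivergesIn K₂ R}, ?_, mem_image2_of_mem rfl h, ?_⟩
  · exact image2_subset (singleton_subset_iff.2 hP) fun _ hR => hR.mem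
  · rintro _ ⟨_, rfl, R, hR, rfl⟩
    exact CanMove.par_right rfl hR.canMove

theorem exists_divergent_iff :
    (∃ t, IsETree E A t ∧ t.Divergent) ↔ DivergesIn (classOf E A) A := by
  constructor
  · rintro ⟨t, ht, hdiv⟩
    have hleaf := ht.1.divergent_iff_forall_not_isLeaf.1 hdiv
    refine ⟨{P | ∃ σ p, t.node σ = some (P, p)}, ?_, ⟨[], 1, ht.1.1⟩, ?_⟩
    · rintro P ⟨σ, p, hP⟩
      exact ht.2.1 σ P p hP
    · rintro P ⟨σ, p, hP⟩
      obtain ⟨l, hl, hchild⟩ := ht.exists_expansion hP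
      refine ⟨l, ?_, hl, fun y hy => ?_⟩
      · rintro rfl
        exact hleaf σ ⟨PTree.hasNode_iff.2 ⟨P, p, hP⟩, by simp [PTree.hasNode, hchild]⟩
      · obtain ⟨i, hi⟩ := List.mem_iff_getElem?.1 hy
        exact ⟨i :: σ, y.2, (hchild i).trans hi⟩
  · rintro ⟨X, hXK, hA, hX⟩
    choose! l hne hexp hl using hX
    have htree := PTree.isETree_unfold hA hXK hexp hl
    refine ⟨_, htree, htree.1.divergent_iff_forall_not_isLeaf.2 fun σ hσ => ?_⟩
    obtain ⟨P, p, hP⟩ := PTree.hasNode_iff.1 hσ.1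
    have hlen := List.length_pos_iff.2 (hne P (PTree.unfold_node_mem hA hl hP))
    exact hσ.2 (by simpa [PTree.hasNode, PTree.unfold_node_cons, hP] using hlen)

theorem codivergent_iff (hE : Equivalence E) :
    Codivergent E ↔ ∀ A B, E A B → DivergesIn (classOf E A) A → DivergesIn (classOf E A) B := by
  simp only [Codivergent, exists_divergent_iff]
  refine ⟨fun h A B hAB hA => (classOf_eq_classOf hE).2 hAB ▸ (h A B hAB).1 hA,
    fun h A B hAB => ⟨fun hA => ?_, fun hB => ?_⟩⟩
  · exact (classOf_eq_classOf hE).2 hAB ▸ h A B hAB hA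
  · exact (classOf_eq_classOf hE).2 (hE.symm hAB) ▸ h B A (hE.symm hAB) hB

theorem exists_canMove_left (hXK : X ⊆ image2 Proc.par K₁ K₂)
    (hX : ∀ P Q, P.par Q ∈ X → CanMove {P' | P'.par Q ∈ X} P ∨ CanMove {Q' | P.par Q' ∈ X} Q)
    (hPQ : P.par Q ∈ X) (hQ : ¬ DivergesIn K₂ Q) :
    ∃ Q', P.par Q' ∈ X ∧ ¬ DivergesIn K₂ Q' ∧ CanMove {P' | P'.par Q' ∈ X} P := by
  by_contra! hstuck
  refine hQ ⟨{Q' | P.par Q' ∈ X ∨ DivergesIn K₂ Q'}, ?_, .inl hPQ, fun Q' hQ' => ?_⟩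
  · rintro Q' (hQ' | hQ')
    · exact ((mem_image2_iff Proc.par_injective2).1 (hXK hQ')).2
    · exact hQ'.mem
  · by_cases hdiv : DivergesIn K₂ Q'
    · exact hdiv.canMove.mono fun _ => .inr
    · have hPQ' := hQ'.resolve_right hdiv
      exact ((hX P Q' hPQ').resolve_left (hstuck Q' hPQ' hdiv)).mono fun _ => .inl

theorem DivergesIn.or_of_par (h : DivergesIn (image2 Proc.par K₁ K₂) (A.par C))
    (hshake : ∀ P ∈ K₁, ∀ Q ∈ K₂, ∀ P' ∈ K₁, ∀ Q' ∈ K₂, ¬ Handshake P Q P' Q') :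
    DivergesIn K₁ A ∨ DivergesIn K₂ C := by
  obtain ⟨X, hXK, hAC, hX⟩ := h
  have hmem {P Q : Proc Chan} (h : P.par Q ∈ X) : P ∈ K₁ ∧ Q ∈ K₂ :=
    (mem_image2_iff Proc.par_injective2).1 (hXK h)
  have hmove (P Q : Proc Chan) (h : P.par Q ∈ X) :
      CanMove {P' | P'.par Q ∈ X} P ∨ CanMove {Q' | P.par Q' ∈ X} Q := by
    refine (hX _ h).par_cases.resolve_left ?_
    rintro ⟨P', Q', hPQ, h'⟩
    exact hshake P (hmem h).1 Q (hmem h).2 P' (hmem h').1 Q' (hmem h').2 hPQ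
  refine or_iff_not_imp_right.2 fun hC => ?_
  refine ⟨{P | ∃ Q, P.par Q ∈ X ∧ ¬ DivergesIn K₂ Q}, ?_, ⟨C, hAC, hC⟩, ?_⟩
  · rintro P ⟨Q, hPQ, -⟩
    exact (hmem hPQ).1
  · rintro P ⟨Q, hPQ, hQ⟩
    obtain ⟨Q', -, hQ', hP⟩ := exists_canMove_left hXK hmove hPQ hQ
    exact hP.mono fun P' hP' => ⟨Q', hP', hQ'⟩

theorem Handshake.canMove_par (h₁ : IsBB E₁) (h₂ : IsBB E₂) {P' Q' : Proc Chan}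
    (h : Handshake P Q P' Q') (hP : P ∈ classOf E₁ A) (hQ : Q ∈ classOf E₂ C)
    (hP' : P' ∈ classOf E₁ A) (hQ' : Q' ∈ classOf E₂ C) (hB : B ∈ classOf E₁ A)
    (hD : D ∈ classOf E₂ C) :
    CanMove (image2 Proc.par (classOf E₁ A) (classOf E₂ C)) (B.par D) := by
  obtain ⟨α, hPα, hQα⟩ := h
  have hreachB := h₁.reaches_stepsInto (guardLab_isAct α) (h₁.1.trans (h₁.1.symm hP) hB)
    (.inl (guardLab_ne_tau α 1)) hPα
  have hreachD := h₂.reaches_stepsInto (guardLab_isAct _) (h₂.1.trans (h₂.1.symm hQ) hD)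
    (.inl (guardLab_ne_tau _ 1)) hQα
  rw [← (classOf_eq_classOf h₁.1).2 hP'] at hreachB
  rw [← (classOf_eq_classOf h₂.1).2 hQ'] at hreachD
  obtain ⟨B', hB', hstepB⟩ | hmoveB := hreachB.mem_or_canMove
  · obtain ⟨D', hD', hstepD⟩ | hmoveD := hreachD.mem_or_canMove
    · refine ⟨_, List.cons_ne_nil _ _, .tau (Handshake.step ⟨α, hstepB, hstepD⟩), ?_⟩
      simpa using mem_image2_of_mem hB' hD'
    · rw [← (classOf_eq_classOf h₂.1).2 hD] at hmoveD
      exact .par_right hB hmoveD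
  · rw [← (classOf_eq_classOf h₁.1).2 hB] at hmoveB
    exact hmoveB.par_left hD

theorem IsCBB.codivergent_parRel (h₁ : IsCBB E₁) (h₂ : IsCBB E₂) : Codivergent (ParRel E₁ E₂) := by
  rw [codivergent_iff (ParRel.equivalence h₁.1.1 h₂.1.1)]
  intro _ _ hrel hdiv
  cases hrel with
  | refl => exact hdiv
  | @par A B C D hAB hCD =>
    rw [classOf_parRel_par h₁.1.1 h₂.1.1] at hdiv ⊢
    by_cases hshake : ∃ P ∈ classOf E₁ A, ∃ Q ∈ classOf E₂ C, ∃ P' ∈ classOf E₁ A,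
        ∃ Q' ∈ classOf E₂ C, Handshake P Q P' Q'
    · obtain ⟨P, hP, Q, hQ, P', hP', Q', hQ', h⟩ := hshake
      refine ⟨_, subset_rfl, mem_image2_of_mem hAB hCD, ?_⟩
      rintro _ ⟨B', hB', D', hD', rfl⟩
      exact h.canMove_par h₁.1 h₂.1 hP hQ hP' hQ' hB' hD'
    · push Not at hshake
      obtain hA | hC := hdiv.or_of_par hshake
      · exact ((codivergent_iff h₁.1.1).1 h₁.2 A B hAB hA).par_left hCD
      · exact .par_right hAB ((codivergent_iff h₂.1.1).1 h₂.2 C D hCD hC)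

end Divergence

theorem IsCBB.parRel {E₁ E₂ : Proc Chan → Proc Chan → Prop} (h₁ : IsCBB E₁) (h₂ : IsCBB E₂) :
    IsCBB (ParRel E₁ E₂) :=
  ⟨h₁.1.parRel h₂.1, h₁.codivergent_parRel h₂⟩

/-- `=_RCCS` is closed under parallel composition. -/
theorem rccsEq_par {Chan : Type} (A B C D : Proc Chan)
    (hAB : RccsEq A B) (hCD : RccsEq C D) : RccsEq (A.par C) (B.par D) := by
  obtain ⟨E₁, hE₁, hAB⟩ := hAB
  obtain ⟨E₂, hE₂, hCD⟩ := hCD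
  exact ⟨ParRel E₁ E₂, hE₁.parRel hE₂, .par hAB hCD⟩
end
end

section
/- If (E_i)_{i∈I} is a family of codivergent branching bisimulations on the set P_CCS of CCS processes, then the equivalence closure (⋃_{i∈I} E_i)* of their union is a codivergent branching bisimulation on P_CCS; consequently there exists a largest codivergent branching bisimulation =_CCS on P_CCS. -/
/-!
Formalization of RCCS (Randomized CCS) following the paper
"A Uniform Framework for Probabilistic Process Models".
Channels form a type `Chan`; terms use de Bruijn indices for process variables.
-/

noncomputable section
open scoped Classical

variable {Chan : Type}

/-! ### CCS -/

/-- The set `P_CCS` of CCS processes: closed well-formed terms with no random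
choice, viewed inside RCCS. -/
def CProc (Chan : Type) : Type := {T : Tm Chan // T.ClosedAt 0 ∧ T.WF ∧ T.NoRand}

/-- A CCS process is an RCCS process. -/
def CProc.toProc (A : CProc Chan) : Proc Chan := ⟨A.val, A.prop.1, A.prop.2.1⟩

/-- `A →^τ_E A'`: a state-preserving silent transition. -/
def TauE (E : CProc Chan → CProc Chan → Prop) (A A' : CProc Chan) : Prop :=
  Step A.val (.tau 1) A'.val ∧ E A A'

/-- `A` is `E`-divergent: there is an infinite sequence of state-preserving
silent transitions from `A`. -/
def CDivergent (E : CProc Chan → CProc Chan → Prop) (A : CProc Chan) : Prop :=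
  ∃ f : ℕ → CProc Chan, f 0 = A ∧ ∀ n, TauE E (f n) (f (n + 1))

/-- An equivalence on `P_CCS` is codivergent if each class consists either
only of `E`-divergent processes or only of non-`E`-divergent ones. -/
def CCodivergent (E : CProc Chan → CProc Chan → Prop) : Prop :=
  ∀ A B, E A B → (CDivergent E A ↔ CDivergent E B)

/-- The `E`-class of a CCS process. -/
def cclassOf (E : CProc Chan → CProc Chan → Prop) (A : CProc Chan) : Set (CProc Chan) :=
  {B | E A B}

/-- `C` is an `E`-class. -/
def CIsClass (E : CProc Chan → CProc Chan → Prop) (C : Set (CProc Chan)) : Prop :=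
  ∃ A, C = cclassOf E A

/-- `A ⇒_E →^ℓ C`: finitely many state-preserving silent transitions followed
by an `ℓ`-transition into the class `C`. -/
def CWeakTo (E : CProc Chan → CProc Chan → Prop) (A : CProc Chan) (l : Lab Chan)
    (C : Set (CProc Chan)) : Prop :=
  ∃ A', Relation.ReflTransGen (TauE E) A A' ∧ ∃ A'' ∈ C, Step A'.val l A''.val

/-- `E` is a branching bisimulation on `P_CCS`. -/
def CIsBB (E : CProc Chan → CProc Chan → Prop) : Prop :=
  Equivalence E ∧
  ∀ A B l C, Lab.IsAct l → CIsClass E C → E A B → (l ≠ Lab.tau 1 ∨ C ≠ cclassOf E A) →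
    CWeakTo E A l C → CWeakTo E B l C

/-- `E` is a codivergent branching bisimulation on `P_CCS`. -/
def CIsCBB (E : CProc Chan → CProc Chan → Prop) : Prop := CIsBB E ∧ CCodivergent E

/-- `=_CCS`, the largest codivergent branching bisimulation on `P_CCS`. -/
def CcsEq (A B : CProc Chan) : Prop := ∃ E, CIsCBB E ∧ E A B

/-!
Let `R` be the equivalence closure of the union of the `E_i`, and let `F` be one of the `E_i`.
An `R`-preserving silent step of `A` either stays in the `F`-class of `A` or, `F` being a branching
bisimulation, is answered by at least one `R`-preserving silent step of each process `F`-related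
to `A`. Hence the weak transitions of `A` with respect to `R` are transferred along `F`. An infinite
`R`-preserving silent run of `A` either stays in one `F`-class, and then `F`-related processes
diverge because `F` is codivergent, or it forces them to make progress while remaining `F`-related
to an `R`-divergent process, and then they diverge by repetition. Both properties spread from the
`E_i` to `R` because `R`-related processes are joined by finite chains of `E_i`-steps.
-/

section StutteringSimulation

open Function Relation

variable {α : Type*} {r F : α → α → Prop} {a a' b : α}

/-- `F` is a stuttering simulation for the reduction relation `r`: a process `F`-related to `a`
may answer a step `a → a'` by staying put, and otherwise has to perform at least one step. -/
def StutteringSimulation (r F : α → α → Prop) : Prop :=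
  ∀ ⦃a a' b⦄, F a b → r a a' → F a' b ∨ ∃ b', TransGen r b b' ∧ F a' b'

namespace StutteringSimulation

theorem exists_reflTransGen (hsim : StutteringSimulation r F) (hab : F a b)
    (haa' : ReflTransGen r a a') : ∃ b', ReflTransGen r b b' ∧ F a' b' := by
  induction haa' with
  | refl => exact ⟨b, .refl, hab⟩
  | tail _ hstep ih =>
    obtain ⟨b', hbb', hb'⟩ := ih
    rcases hsim hb' hstep with hstay | ⟨b'', hb'b'', hb''⟩
    · exact ⟨b', hbb', hstay⟩
    · exact ⟨b'', hbb'.trans hb'b''.to_reflTransGen, hb''⟩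

theorem forall_rel_or_exists_transGen (hsim : StutteringSimulation r F) {f : ℕ → α}
    (hf : ∀ n, r (f n) (f (n + 1))) (hb : F (f 0) b) :
    (∀ n, F (f n) b) ∨ ∃ n b', TransGen r b b' ∧ F (f n) b' := by
  refine or_iff_not_imp_right.2 fun hno n ↦ ?_
  induction n with
  | zero => exact hb
  | succ n ih => exact (hsim ih (hf n)).resolve_right fun hex ↦ hno ⟨n + 1, hex⟩

theorem not_acc_swap (hsim : StutteringSimulation r F)
    (hstay : ∀ (f : ℕ → α) b, (∀ n, r (f n) (f (n + 1))) → (∀ n, F (f n) b) → ¬ Acc (swap r) b)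
    (hab : F a b) (ha : ¬ Acc (swap r) a) : ¬ Acc (swap r) b := by
  intro hb
  induction hb.transGen generalizing a with
  | intro b _ ih =>
    obtain ⟨f, rfl, hf⟩ := not_acc_iff_exists_descending_chain.1 ha
    rcases hsim.forall_rel_or_exists_transGen hf hab with hall | ⟨n, b', hbb', hb'⟩
    · exact hstay f b hf hall hb
    · have hfn : ¬ Acc (swap r) (f n) :=
        not_acc_iff_exists_descending_chain.2 ⟨fun k ↦ f (n + k), rfl, fun k ↦ hf (n + k)⟩
      have hb'b : TransGen (swap r) b' b := transGen_swap.2 hbb'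
      exact ih b' hb'b hb' hfn (acc_transGen_iff.1 (hb.transGen.inv hb'b))

end StutteringSimulation

end StutteringSimulation

section BranchingBisimulation

open Function Relation

variable {E F R : CProc Chan → CProc Chan → Prop} {A A' B : CProc Chan} {l : Lab Chan}
  {C : Set (CProc Chan)}

theorem TauE.mono (hFR : F ≤ R) : TauE F ≤ TauE R :=
  fun _ _ h ↦ ⟨h.1, hFR _ _ h.2⟩

theorem reflTransGen_tauE_le (hE : Equivalence E) : ReflTransGen (TauE E) ≤ E := by
  intro A B h
  induction h with
  | refl => exact hE.refl A
  | tail _ hstep ih => exact hE.trans ih hstep.2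

theorem CIsClass.mem_congr (hC : CIsClass E C) (hE : Equivalence E) (hAB : E A B) :
    A ∈ C ↔ B ∈ C := by
  obtain ⟨D, rfl⟩ := hC
  exact ⟨fun hDA ↦ hE.trans hDA hAB, fun hDB ↦ hE.trans hDB (hE.symm hAB)⟩

theorem CIsClass.eq_cclassOf_iff (hC : CIsClass E C) (hE : Equivalence E) :
    C = cclassOf E A ↔ A ∈ C := by
  refine ⟨fun h ↦ h ▸ hE.refl A, fun hA ↦ ?_⟩
  obtain ⟨D, rfl⟩ := hC
  ext B
  exact ⟨fun hDB ↦ hE.trans (hE.symm hA) hDB, fun hAB ↦ hE.trans hA hAB⟩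

theorem cDivergent_iff_not_acc : CDivergent E A ↔ ¬ Acc (swap (TauE E)) A :=
  (not_acc_iff_exists_descending_chain (r := swap (TauE E))).symm

theorem CDivergent.mono (hFR : F ≤ R) : CDivergent F A → CDivergent R A :=
  fun ⟨f, hf₀, hf⟩ ↦ ⟨f, hf₀, fun n ↦ TauE.mono hFR _ _ (hf n)⟩

theorem CIsBB.exists_step (hF : CIsBB F) (hl : l.IsAct) (hAB : F A B)
    (hAA' : Step A.val l A'.val) (hleave : l ≠ .tau 1 ∨ ¬ F A A') :
    ∃ B' B'', ReflTransGen (TauE F) B B' ∧ Step B'.val l B''.val ∧ F A' B'' := by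
  have hrefl : A' ∈ cclassOf F A' := hF.1.refl A'
  have hclass : l ≠ .tau 1 ∨ cclassOf F A' ≠ cclassOf F A :=
    hleave.imp_right fun hAA'F heq ↦ hAA'F (heq.subset hrefl)
  obtain ⟨B', hBB', B'', hB'', hstep⟩ :=
    hF.2 A B l (cclassOf F A') hl ⟨A', rfl⟩ hAB hclass ⟨A, .refl, A', hrefl, hAA'⟩
  exact ⟨B', B'', hBB', hstep, hB''⟩

theorem CIsBB.stutteringSimulation (hF : CIsBB F) (hR : Equivalence R) (hFR : F ≤ R) :
    StutteringSimulation (TauE R) F := by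
  intro A A' B hAB hAA'
  by_cases hstay : F A A'
  · exact .inl (hF.1.trans (hF.1.symm hstay) hAB)
  · obtain ⟨B', B'', hBB', hstep, hA'B''⟩ :=
      hF.exists_step (l := .tau 1) rfl hAB hAA'.1 (.inr hstay)
    have hB'A : R B' A :=
      hFR _ _ (hF.1.symm (hF.1.trans hAB (reflTransGen_tauE_le hF.1 _ _ hBB')))
    have hB'B'' : R B' B'' := hR.trans (hR.trans hB'A hAA'.2) (hFR _ _ hA'B'')
    have hBB'R : ReflTransGen (TauE R) B B' := ReflTransGen.mono (TauE.mono hFR) _ _ hBB'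
    exact .inr ⟨B'', .tail' hBB'R ⟨hstep, hB'B''⟩, hA'B''⟩

theorem CIsBB.cWeakTo_of_rel (hF : CIsBB F) (hR : Equivalence R) (hFR : F ≤ R) (hl : l.IsAct)
    (hC : CIsClass R C) (hAB : F A B) (hleave : l ≠ .tau 1 ∨ A ∉ C) (hA : CWeakTo R A l C) :
    CWeakTo R B l C := by
  obtain ⟨A', hAA', A'', hA''C, hA'A''⟩ := hA
  obtain ⟨B', hBB', hA'B'⟩ := (hF.stutteringSimulation hR hFR).exists_reflTransGen hAB hAA'
  have hleave' : l ≠ .tau 1 ∨ ¬ F A' A'' := hleave.imp_right fun hAC hA'A''F ↦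
    have hAA''R : R A A'' := hR.trans (reflTransGen_tauE_le hR _ _ hAA') (hFR _ _ hA'A''F)
    hAC ((hC.mem_congr hR hAA''R).2 hA''C)
  obtain ⟨B'', B''', hB'B'', hstep, hA''B'''⟩ := hF.exists_step hl hA'B' hA'A'' hleave'
  exact ⟨B'', hBB'.trans (ReflTransGen.mono (TauE.mono hFR) _ _ hB'B''), B''',
    (hC.mem_congr hR (hFR _ _ hA''B''')).1 hA''C, hstep⟩

theorem CIsCBB.cDivergent_of_rel (hF : CIsCBB F) (hR : Equivalence R) (hFR : F ≤ R)
    (hAB : F A B) (hA : CDivergent R A) : CDivergent R B := by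
  have hstay (f : ℕ → CProc Chan) (B : CProc Chan) (hf : ∀ n, TauE R (f n) (f (n + 1)))
      (hfB : ∀ n, F (f n) B) : ¬ Acc (swap (TauE R)) B := by
    have hfF : CDivergent F (f 0) :=
      ⟨f, rfl, fun n ↦ ⟨(hf n).1, hF.1.1.trans (hfB n) (hF.1.1.symm (hfB (n + 1)))⟩⟩
    exact cDivergent_iff_not_acc.1 (((hF.2 _ _ (hfB 0)).1 hfF).mono hFR)
  exact cDivergent_iff_not_acc.2 <|
    (hF.1.stutteringSimulation hR hFR).not_acc_swap hstay hAB (cDivergent_iff_not_acc.1 hA)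

section Union

variable {I : Sort*} {E : I → CProc Chan → CProc Chan → Prop}

theorem eqvGen_iUnion_eq_reflTransGen (hE : ∀ i, Equivalence (E i)) :
    EqvGen (fun A B ↦ ∃ i, E i A B) = ReflTransGen fun A B ↦ ∃ i, E i A B :=
  have : Std.Symm fun A B ↦ ∃ i, E i A B := ⟨fun _ _ ⟨i, hi⟩ ↦ ⟨i, (hE i).symm hi⟩⟩
  EqvGen.eqvGen_eq_reflTransGen _

theorem le_eqvGen_iUnion (i : I) : E i ≤ EqvGen fun A B ↦ ∃ i, E i A B :=
  fun _ _ hi ↦ .rel _ _ ⟨i, hi⟩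

theorem cIsBB_eqvGen_iUnion (h : ∀ i, CIsBB (E i)) : CIsBB (EqvGen fun A B ↦ ∃ i, E i A B) := by
  have hR := EqvGen.is_equivalence fun A B ↦ ∃ i, E i A B
  refine ⟨hR, fun A B l C hl hC hAB hne hA ↦ ?_⟩
  have hleave : l ≠ .tau 1 ∨ A ∉ C := hne.imp_right (mt (hC.eq_cclassOf_iff hR).2)
  rw [eqvGen_iUnion_eq_reflTransGen fun i ↦ (h i).1] at hAB
  induction hAB using ReflTransGen.head_induction_on with
  | refl => exact hA
  | head hstep _ ih =>
    obtain ⟨i, hi⟩ := hstep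
    have hmem := hC.mem_congr hR (le_eqvGen_iUnion i _ _ hi)
    have hleave' := hleave.imp_right (mt hmem.2)
    exact ih (hleave'.imp_right (mt (hC.eq_cclassOf_iff hR).1))
      ((h i).cWeakTo_of_rel hR (le_eqvGen_iUnion i) hl hC hi hleave hA) hleave'

theorem CDivergent.of_eqvGen_iUnion (h : ∀ i, CIsCBB (E i))
    (hAB : EqvGen (fun A B ↦ ∃ i, E i A B) A B)
    (hA : CDivergent (EqvGen fun A B ↦ ∃ i, E i A B) A) :
    CDivergent (EqvGen fun A B ↦ ∃ i, E i A B) B := by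
  rw [eqvGen_iUnion_eq_reflTransGen fun i ↦ (h i).1.1] at hAB
  induction hAB with
  | refl => exact hA
  | tail _ hstep ih =>
    obtain ⟨i, hi⟩ := hstep
    exact (h i).cDivergent_of_rel (EqvGen.is_equivalence _) (le_eqvGen_iUnion i) hi ih

theorem cCodivergent_eqvGen_iUnion (h : ∀ i, CIsCBB (E i)) :
    CCodivergent (EqvGen fun A B ↦ ∃ i, E i A B) :=
  fun A B hAB ↦ ⟨.of_eqvGen_iUnion h hAB, .of_eqvGen_iUnion h (hAB.symm A B)⟩

theorem cIsCBB_eqvGen_iUnion (h : ∀ i, CIsCBB (E i)) :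
    CIsCBB (EqvGen fun A B ↦ ∃ i, E i A B) :=
  ⟨cIsBB_eqvGen_iUnion fun i ↦ (h i).1, cCodivergent_eqvGen_iUnion h⟩

end Union

theorem cIsCBB_ccsEq : CIsCBB (CcsEq (Chan := Chan)) := by
  let E (F : {F : CProc Chan → CProc Chan → Prop // CIsCBB F}) := F.1
  have hclosure : CIsCBB (EqvGen fun A B ↦ ∃ F, E F A B) := cIsCBB_eqvGen_iUnion Subtype.prop
  have heq : CcsEq = EqvGen fun A B ↦ ∃ F, E F A B := by
    ext A B
    exact ⟨fun ⟨F, hF, hAB⟩ ↦ .rel _ _ ⟨⟨F, hF⟩, hAB⟩, fun hAB ↦ ⟨_, hclosure, hAB⟩⟩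
  rwa [heq]

end BranchingBisimulation

/-- If `(E_i)_{i∈I}` is a family of codivergent branching
bisimulations on `P_CCS`, then the equivalence closure of their union is a
codivergent branching bisimulation on `P_CCS`; consequently there exists a
largest codivergent branching bisimulation `=_CCS` on `P_CCS`. -/
theorem ccs_eqvGen_iUnion_cbb {Chan : Type} {I : Type}
    (E : I → CProc Chan → CProc Chan → Prop) (h : ∀ i, CIsCBB (E i)) :
    CIsCBB (Relation.EqvGen fun A B => ∃ i, E i A B) ∧
    ∃ R : CProc Chan → CProc Chan → Prop, CIsCBB R ∧
      ∀ E', CIsCBB E' → ∀ A B, E' A B → R A B :=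
  ⟨cIsCBB_eqvGen_iUnion h, CcsEq, cIsCBB_ccsEq, fun E' hE' _ _ hAB ↦ ⟨E', hE', hAB⟩⟩
end
end
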